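/- arXiv:1808.00587 — 2 statements merged into one kernel-verified Lean document; each statement's English description precedes it below -/
import Mathlib

section
/- Assume 1 ≤ n_B ≤ n−1 and 1 ≤ n_N ≤ n−1 and that the gaps g_X = λ_{[n_B]}(X^μ) − λ_{[n_B+1]}(X^μ) and g_S = λ_{[n_N]}(S^μ) − λ_{[n_N+1]}(S^μ) are positive. If |ε| < (1/(θ^μ ‖C̄‖)) · min{ δ^μ/2, 1/(2 θ^μ), g_X/10, g_S/10 }, then there exists a central solution (X^μ(ε), y^μ(ε), S^μ(ε)) of the perturbed problems (P_ε) and (D_ε) with the same μ such that: the n_B largest eigenvalues of X^μ(ε) are strictly larger than its remaining eigenvalues and the n_N largest eigenvalues of S^μ(ε) are strictly larger than its remaining eigenvalues; and, writing R_B^μ, R_B^μ(ε) for the spans of eigenvectors corresponding to the n_B largest eigenvalues of X^μ and X^μ(ε) and R_N^μ, R_N^μ(ε) for the spans of eigenvectors corresponding to the n_N largest eigenvalues of S^μ and S^μ(ε), one has dist(R_B^μ, R_B^μ(ε)) ≤ 4(1 − sqrt(1 − 2|ε| (θ^μ)² ‖C̄‖)) / (θ^μ g_X) and dist(R_N^μ,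 R_N^μ(ε)) ≤ 4(1 − sqrt(1 − 2|ε| (θ^μ)² ‖C̄‖)) / (θ^μ g_S). -/
open Matrix Set

noncomputable section

variable {n m : ℕ}

/-- Feasibility for the primal SDO problem `(P_ε)` (the feasible set does not depend on `ε`). -/
def PrimalFeasible (A : Fin m → Matrix (Fin n) (Fin n) ℝ) (b : Fin m → ℝ)
    (X : Matrix (Fin n) (Fin n) ℝ) : Prop :=
  X.IsSymm ∧ (∀ i, ((A i) * X).trace = b i) ∧ X.PosSemidef

/-- Feasibility for the dual SDO problem `(D_ε)`. -/
def DualFeasible (C Cbar : Matrix (Fin n) (Fin n) ℝ)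
    (A : Fin m → Matrix (Fin n) (Fin n) ℝ) (ε : ℝ)
    (y : Fin m → ℝ) (S : Matrix (Fin n) (Fin n) ℝ) : Prop :=
  S.IsSymm ∧ (∑ i, y i • A i) + S = C + ε • Cbar ∧ S.PosSemidef

/-- The optimal value function `v(ε)` of `(P_ε)`, with values in `EReal`. -/
def vfun (C Cbar : Matrix (Fin n) (Fin n) ℝ) (A : Fin m → Matrix (Fin n) (Fin n) ℝ)
    (b : Fin m → ℝ) (ε : ℝ) : EReal :=
  sInf ((fun X => (((C + ε • Cbar) * X).trace : EReal)) '' {X | PrimalFeasible A b X})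

/-- `E = {ε : v(ε) > -∞}`. -/
def Eset (C Cbar : Matrix (Fin n) (Fin n) ℝ) (A : Fin m → Matrix (Fin n) (Fin n) ℝ)
    (b : Fin m → ℝ) : Set ℝ :=
  {ε | ⊥ < vfun C Cbar A b ε}

/-- The primal optimal set `P*(ε)`. -/
def PrimalOpt (C Cbar : Matrix (Fin n) (Fin n) ℝ) (A : Fin m → Matrix (Fin n) (Fin n) ℝ)
    (b : Fin m → ℝ) (ε : ℝ) : Set (Matrix (Fin n) (Fin n) ℝ) :=
  {X | PrimalFeasible A b X ∧ ∀ X', PrimalFeasible A b X' →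
    ((C + ε • Cbar) * X).trace ≤ ((C + ε • Cbar) * X').trace}

/-- The dual optimal set `D*(ε)`. -/
def DualOpt (C Cbar : Matrix (Fin n) (Fin n) ℝ) (A : Fin m → Matrix (Fin n) (Fin n) ℝ)
    (b : Fin m → ℝ) (ε : ℝ) : Set ((Fin m → ℝ) × Matrix (Fin n) (Fin n) ℝ) :=
  {p | DualFeasible C Cbar A ε p.1 p.2 ∧ ∀ y' S', DualFeasible C Cbar A ε y' S' →
    ∑ i, b i * y' i ≤ ∑ i, b i * p.1 i}

/-- A maximally complementary optimal solution: `X` lies in the relative interior of `P*(ε)`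
and `(y, S)` in the relative interior of `D*(ε)`. -/
def MaxComp (C Cbar : Matrix (Fin n) (Fin n) ℝ) (A : Fin m → Matrix (Fin n) (Fin n) ℝ)
    (b : Fin m → ℝ) (ε : ℝ) (X : Matrix (Fin n) (Fin n) ℝ) (y : Fin m → ℝ)
    (S : Matrix (Fin n) (Fin n) ℝ) : Prop :=
  X ∈ intrinsicInterior ℝ (PrimalOpt C Cbar A b ε) ∧
    (y, S) ∈ intrinsicInterior ℝ (DualOpt C Cbar A b ε)

/-- `π(ε) = π(ε')`: the optimal partitions at `ε` and `ε'` coincide, expressed through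
maximally complementary solutions (`B = range X*`, `N = range S*`, `T` being determined
by `B` and `N`). -/
def SamePartition (C Cbar : Matrix (Fin n) (Fin n) ℝ) (A : Fin m → Matrix (Fin n) (Fin n) ℝ)
    (b : Fin m → ℝ) (ε ε' : ℝ) : Prop :=
  ∃ X y S X' y' S', MaxComp C Cbar A b ε X y S ∧ MaxComp C Cbar A b ε' X' y' S' ∧
    LinearMap.range X.mulVecLin = LinearMap.range X'.mulVecLin ∧
    LinearMap.range S.mulVecLin = LinearMap.range S'.mulVecLin

/-- The standing assumptions: symmetric data, linearly independent constraint matrices and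
the interior point condition at `ε = 0`. -/
def StandingAssumptions (C Cbar : Matrix (Fin n) (Fin n) ℝ)
    (A : Fin m → Matrix (Fin n) (Fin n) ℝ) (b : Fin m → ℝ) : Prop :=
  C.IsSymm ∧ Cbar.IsSymm ∧ (∀ i, (A i).IsSymm) ∧ LinearIndependent ℝ A ∧
    ∃ X y S, PrimalFeasible A b X ∧ X.PosDef ∧ DualFeasible C Cbar A 0 y S ∧ S.PosDef

/-- The invariancy set of `ε̄`. -/
def InvSet (C Cbar : Matrix (Fin n) (Fin n) ℝ) (A : Fin m → Matrix (Fin n) (Fin n) ℝ)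
    (b : Fin m → ℝ) (εbar : ℝ) : Set ℝ :=
  {ε | ε ∈ interior (Eset C Cbar A b) ∧ SamePartition C Cbar A b ε εbar}

/-- `dim B(ε) = dim B(ε')` and `dim N(ε) = dim N(ε')`, expressed through maximally
complementary solutions. -/
def DimsMatch (C Cbar : Matrix (Fin n) (Fin n) ℝ) (A : Fin m → Matrix (Fin n) (Fin n) ℝ)
    (b : Fin m → ℝ) (ε ε' : ℝ) : Prop :=
  ∀ X y S X' y' S', MaxComp C Cbar A b ε X y S → MaxComp C Cbar A b ε' X' y' S' →
    Module.finrank ℝ (LinearMap.range X.mulVecLin) =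
        Module.finrank ℝ (LinearMap.range X'.mulVecLin) ∧
      Module.finrank ℝ (LinearMap.range S.mulVecLin) =
        Module.finrank ℝ (LinearMap.range S'.mulVecLin)

/-- A transition point: a singleton invariancy set such that every neighborhood contains a
parameter at which `dim B` or `dim N` differs. -/
def IsTransitionPoint (C Cbar : Matrix (Fin n) (Fin n) ℝ) (A : Fin m → Matrix (Fin n) (Fin n) ℝ)
    (b : Fin m → ℝ) (εbar : ℝ) : Prop :=
  εbar ∈ interior (Eset C Cbar A b) ∧
    (∀ ε ∈ interior (Eset C Cbar A b), ε ≠ εbar → ¬ SamePartition C Cbar A b ε εbar) ∧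
    ∀ ξ : ℝ, 0 < ξ → ∃ ε ∈ Set.Ioo (εbar - ξ) (εbar + ξ) ∩ interior (Eset C Cbar A b),
      ¬ DimsMatch C Cbar A b ε εbar

/-- Existence of a strictly complementary optimal solution at `ε`. -/
def HasStrictComp (C Cbar : Matrix (Fin n) (Fin n) ℝ) (A : Fin m → Matrix (Fin n) (Fin n) ℝ)
    (b : Fin m → ℝ) (ε : ℝ) : Prop :=
  ∃ X y S, X ∈ PrimalOpt C Cbar A b ε ∧ (y, S) ∈ DualOpt C Cbar A b ε ∧ (X + S).PosDef

/-- Nonsingularity of the Jacobian `J(X, y, S)` of the optimality system, as a linear map on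
`S^n × ℝ^m × S^n`: only the trivial symmetric triple is mapped to zero. -/
def JNonsingular (A : Fin m → Matrix (Fin n) (Fin n) ℝ)
    (X S : Matrix (Fin n) (Fin n) ℝ) : Prop :=
  ∀ (DX DS : Matrix (Fin n) (Fin n) ℝ) (Dy : Fin m → ℝ), DX.IsSymm → DS.IsSymm →
    (∀ i, ((A i) * DX).trace = 0) → ((∑ i, Dy i • A i) + DS = 0) →
    (DX * S + S * DX + X * DS + DS * X = 0) → DX = 0 ∧ Dy = 0 ∧ DS = 0

/-- Primal nondegeneracy of a primal feasible `X`. -/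
def PrimalNondeg (A : Fin m → Matrix (Fin n) (Fin n) ℝ)
    (X : Matrix (Fin n) (Fin n) ℝ) : Prop :=
  ∃ (r : ℕ) (M₁ : Matrix (Fin n) (Fin r) ℝ) (M₂ : Matrix (Fin n) (Fin (n - r)) ℝ),
    M₁ᵀ * M₁ = 1 ∧ M₂ᵀ * M₂ = 1 ∧ M₁ᵀ * M₂ = 0 ∧
    LinearMap.range M₁.mulVecLin = LinearMap.range X.mulVecLin ∧
    LinearIndependent ℝ (fun i =>
      Matrix.fromBlocks (M₁ᵀ * (A i) * M₁) (M₁ᵀ * (A i) * M₂) (M₂ᵀ * (A i) * M₁) 0)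

/-- Dual nondegeneracy of a dual feasible `(y, S)` (the condition involves only `S`). -/
def DualNondeg (A : Fin m → Matrix (Fin n) (Fin n) ℝ)
    (S : Matrix (Fin n) (Fin n) ℝ) : Prop :=
  ∃ (k : ℕ) (N₁ : Matrix (Fin n) (Fin k) ℝ),
    N₁ᵀ * N₁ = 1 ∧ LinearMap.range N₁.mulVecLin = LinearMap.ker S.mulVecLin ∧
    ∀ W : Matrix (Fin k) (Fin k) ℝ, W.IsSymm →
      W ∈ Submodule.span ℝ (Set.range fun i => N₁ᵀ * (A i) * N₁)

/-- A central solution with parameter `μ` for the problems `(P_ε)` and `(D_ε)`. -/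
def CentralSol (C Cbar : Matrix (Fin n) (Fin n) ℝ) (A : Fin m → Matrix (Fin n) (Fin n) ℝ)
    (b : Fin m → ℝ) (ε μ : ℝ) (X : Matrix (Fin n) (Fin n) ℝ) (y : Fin m → ℝ)
    (S : Matrix (Fin n) (Fin n) ℝ) : Prop :=
  PrimalFeasible A b X ∧ DualFeasible C Cbar A ε y S ∧
    X * S = μ • (1 : Matrix (Fin n) (Fin n) ℝ)

/-- The Frobenius norm of a matrix. -/
def frobNorm {α β : Type*} [Fintype α] [Fintype β] (M : Matrix α β ℝ) : ℝ :=
  Real.sqrt (∑ i, ∑ j, (M i j) ^ 2)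

/-- The spectral norm (induced 2-norm) of a square matrix. -/
def specNorm {N : ℕ} (M : Matrix (Fin N) (Fin N) ℝ) : ℝ :=
  ‖LinearMap.toContinuousLinearMap (Matrix.toEuclideanLin M)‖

/-- The smallest eigenvalue of a symmetric matrix, via the Rayleigh quotient. -/
def lamMin {k : ℕ} (M : Matrix (Fin k) (Fin k) ℝ) : ℝ :=
  sInf {r : ℝ | ∃ x : Fin k → ℝ, (∑ i, (x i) ^ 2) = 1 ∧ r = x ⬝ᵥ M.mulVec x}

/-- `θ^μ`: the operator norm of the inverse of the Jacobian `J(X, y, S)` on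
`S^n × ℝ^m × S^n`, characterized as the least constant `t ≥ 0` with
`‖(ΔX, Δy, ΔS)‖ ≤ t * ‖J(X,y,S)(ΔX, Δy, ΔS)‖` for all symmetric `ΔX`, `ΔS`. -/
def thetaMu (A : Fin m → Matrix (Fin n) (Fin n) ℝ)
    (X S : Matrix (Fin n) (Fin n) ℝ) : ℝ :=
  sInf {t : ℝ | 0 ≤ t ∧ ∀ (DX DS : Matrix (Fin n) (Fin n) ℝ) (Dy : Fin m → ℝ),
    DX.IsSymm → DS.IsSymm →
    Real.sqrt (frobNorm DX ^ 2 + (∑ i, (Dy i) ^ 2) + frobNorm DS ^ 2) ≤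
      t * Real.sqrt ((∑ i, (((A i) * DX).trace) ^ 2) +
        frobNorm ((∑ i, Dy i • A i) + DS) ^ 2 +
        frobNorm ((1 / 2 : ℝ) • (DX * S + S * DX + X * DS + DS * X)) ^ 2)}

/-- A nonlinearity interval: a non-singleton open subinterval of `int(E)`, of maximal length,
on which `dim B(·)` and `dim N(·)` are constant while the optimal partition `π(·)` varies. -/
def IsNonlinearityInterval (C Cbar : Matrix (Fin n) (Fin n) ℝ)
    (A : Fin m → Matrix (Fin n) (Fin n) ℝ) (b : Fin m → ℝ) (I : Set ℝ) : Prop :=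
  I ⊆ interior (Eset C Cbar A b) ∧ IsOpen I ∧ I.OrdConnected ∧
    (∃ a ∈ I, ∃ c ∈ I, a ≠ c) ∧
    (∀ ε ∈ I, ∀ ε' ∈ I, DimsMatch C Cbar A b ε ε') ∧
    ¬ (∀ ε ∈ I, ∀ ε' ∈ I, SamePartition C Cbar A b ε ε') ∧
    ∀ I' : Set ℝ, I ⊆ I' → I' ⊆ interior (Eset C Cbar A b) → IsOpen I' → I'.OrdConnected →
      (∀ ε ∈ I', ∀ ε' ∈ I', DimsMatch C Cbar A b ε ε') → I' = I

end

theorem frobNorm_sq' {α β : Type*} [Fintype α] [Fintype β] (M : Matrix α β ℝ) :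
    frobNorm M ^ 2 = ∑ i, ∑ j, (M i j) ^ 2 :=
  Real.sq_sqrt (Finset.sum_nonneg fun _ _ => Finset.sum_nonneg fun _ _ => sq_nonneg _)

theorem frobNorm_nonneg' {α β : Type*} [Fintype α] [Fintype β] (M : Matrix α β ℝ) :
    0 ≤ frobNorm M := Real.sqrt_nonneg _

theorem frobNorm_sq_trace {α β : Type*} [Fintype α] [Fintype β] (M : Matrix α β ℝ) :
    frobNorm M ^ 2 = (Mᵀ * M).trace := by
  rw [frobNorm_sq', Finset.sum_comm]
  simp [Matrix.trace, Matrix.mul_apply, sq]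

theorem frobNorm_orth {N : ℕ} (U V M : Matrix (Fin N) (Fin N) ℝ) (hU : Uᵀ * U = 1)
    (hV : Vᵀ * V = 1) : frobNorm (Uᵀ * M * V) = frobNorm M := by
  have hU' : U * Uᵀ = 1 := mul_eq_one_comm.mp hU
  have hV' : V * Vᵀ = 1 := mul_eq_one_comm.mp hV
  have h : frobNorm (Uᵀ * M * V) ^ 2 = frobNorm M ^ 2 := by
    rw [frobNorm_sq_trace, frobNorm_sq_trace]
    simp only [Matrix.transpose_mul, Matrix.transpose_transpose]
    have : Vᵀ * (Mᵀ * U) * (Uᵀ * M * V) = Vᵀ * (Mᵀ * (U * Uᵀ) * M * V) := by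
      simp only [Matrix.mul_assoc]
    rw [this, hU', Matrix.trace_mul_comm, Matrix.mul_one, Matrix.mul_assoc, hV', Matrix.mul_one]
  exact (sq_eq_sq₀ (frobNorm_nonneg' _) (frobNorm_nonneg' _)).mp h

theorem mulVec_sq_le {N : ℕ} (M : Matrix (Fin N) (Fin N) ℝ) (x : Fin N → ℝ) :
    ∑ i, (M *ᵥ x) i ^ 2 ≤ frobNorm M ^ 2 * ∑ i, x i ^ 2 := by
  rw [frobNorm_sq', Finset.sum_mul]
  refine Finset.sum_le_sum fun i _ => ?_
  exact Finset.sum_mul_sq_le_sq_mul_sq Finset.univ (fun j => M i j) x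

theorem quad_le {N : ℕ} (M : Matrix (Fin N) (Fin N) ℝ) (x : Fin N → ℝ) :
    |x ⬝ᵥ M *ᵥ x| ≤ frobNorm M * ∑ i, x i ^ 2 := by
  have h0 : 0 ≤ ∑ i, x i ^ 2 := Finset.sum_nonneg fun _ _ => sq_nonneg _
  refine abs_le_of_sq_le_sq ?_ (mul_nonneg (frobNorm_nonneg' _) h0)
  have h1 : (x ⬝ᵥ M *ᵥ x) ^ 2 ≤ (∑ i, x i ^ 2) * ∑ i, (M *ᵥ x) i ^ 2 :=
    Finset.sum_mul_sq_le_sq_mul_sq _ _ _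
  have h2 := mul_le_mul_of_nonneg_left (mulVec_sq_le M x) h0
  nlinarith

theorem specNorm_le_frob {N : ℕ} (M : Matrix (Fin N) (Fin N) ℝ) : specNorm M ≤ frobNorm M := by
  refine ContinuousLinearMap.opNorm_le_bound _ (frobNorm_nonneg' _) fun x => ?_
  refine le_of_sq_le_sq ?_ (mul_nonneg (frobNorm_nonneg' _) (norm_nonneg _))
  rw [mul_pow, EuclideanSpace.norm_sq_eq, EuclideanSpace.norm_sq_eq]
  simpa using mulVec_sq_le M x.ofLp

/-- sorted spectral decomposition -/
theorem exists_sorted {N : ℕ} (M : Matrix (Fin N) (Fin N) ℝ) (hM : M.IsSymm) :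
    ∃ (ν : Fin N → ℝ) (P : Matrix (Fin N) (Fin N) ℝ), Antitone ν ∧ Pᵀ * P = 1 ∧
      M * P = P * Matrix.diagonal ν := by
  have hH : M.IsHermitian := by
    rw [Matrix.IsHermitian, Matrix.conjTranspose_eq_transpose_of_trivial]; exact hM
  set U : Matrix (Fin N) (Fin N) ℝ := (hH.eigenvectorUnitary : Matrix (Fin N) (Fin N) ℝ)
  have hU : Uᵀ * U = 1 := by
    have := (Matrix.mem_unitaryGroup_iff').mp hH.eigenvectorUnitary.2
    simpa [Matrix.star_eq_conjTranspose] using this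
  have hMU : M * U = U * Matrix.diagonal hH.eigenvalues := by
    ext i j
    have := congrFun (hH.mulVec_eigenvectorBasis j) i
    rw [Matrix.mul_diagonal]
    simpa [Matrix.mul_apply, Matrix.mulVec, dotProduct, U, mul_comm] using this
  let σ := Tuple.sort (fun i => - hH.eigenvalues i)
  have hσ : Monotone ((fun i => - hH.eigenvalues i) ∘ σ) := Tuple.monotone_sort _
  refine ⟨hH.eigenvalues ∘ σ, U.submatrix id σ, ?_, ?_, ?_⟩
  · intro i j hij
    have := hσ hij
    simpa using this
  · ext i j
    have := congrFun (congrFun hU (σ i)) (σ j)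
    simpa [Matrix.mul_apply, Matrix.one_apply] using this
  · ext i j
    have := congrFun (congrFun hMU i) (σ j)
    rw [Matrix.mul_diagonal] at this ⊢
    simpa [Matrix.mul_apply] using this

theorem quad_diag {N : ℕ} (M P : Matrix (Fin N) (Fin N) ℝ) (ν : Fin N → ℝ)
    (hP : Pᵀ * P = 1) (hd : M * P = P * Matrix.diagonal ν) (x : Fin N → ℝ) :
    x ⬝ᵥ M *ᵥ x = ∑ i, ν i * (Pᵀ *ᵥ x) i ^ 2 := by
  have hP' : P * Pᵀ = 1 := mul_eq_one_comm.mp hP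
  have hM : M = P * (Matrix.diagonal ν * Pᵀ) := by
    rw [← Matrix.mul_assoc, ← hd, Matrix.mul_assoc, hP', Matrix.mul_one]
  rw [hM, ← Matrix.mulVec_mulVec, Matrix.dotProduct_mulVec, ← Matrix.mulVec_transpose,
    ← Matrix.mulVec_mulVec]
  simp only [dotProduct, Matrix.mulVec_diagonal]
  refine Finset.sum_congr rfl fun i _ => by ring

theorem sq_orth {N : ℕ} (P : Matrix (Fin N) (Fin N) ℝ)
    (hP : Pᵀ * P = 1) (x : Fin N → ℝ) :
    ∑ i, (Pᵀ *ᵥ x) i ^ 2 = ∑ i, x i ^ 2 := by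
  have := quad_diag 1 P (fun _ => 1) hP (by simp) x
  simp only [Matrix.one_mulVec, one_mul] at this
  rw [← this]; simp [dotProduct, sq]

/-- Weyl-type inequality -/
theorem weyl {N : ℕ} (M M' Q P : Matrix (Fin N) (Fin N) ℝ) (φ ν : Fin N → ℝ)
    (hφ : Antitone φ) (hν : Antitone ν)
    (hQ : Qᵀ * Q = 1) (hQd : M * Q = Q * Matrix.diagonal φ)
    (hP : Pᵀ * P = 1) (hPd : M' * P = P * Matrix.diagonal ν) (k : Fin N) :
    ν k ≤ φ k + frobNorm (M' - M) := by
  have hk : (k : ℕ) + 1 ≤ N := k.2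
  -- coefficients
  let e : (Fin (k + 1) → ℝ) →ₗ[ℝ] (Fin N → ℝ) :=
    (P.submatrix id (Fin.castLE hk)).mulVecLin
  let f : (Fin (k + 1) → ℝ) →ₗ[ℝ] (Fin k → ℝ) :=
    (((Qᵀ).submatrix (Fin.castLE k.2.le) id).mulVecLin).comp e
  have hker : LinearMap.ker f ≠ ⊥ := LinearMap.ker_ne_bot_of_finrank_lt (by simp)
  obtain ⟨c, hc, hc0⟩ := Submodule.exists_mem_ne_zero_of_ne_bot hker
  set x := e c with hx
  have hxQ : ∀ i : Fin N, i < k → (Qᵀ *ᵥ x) i = 0 := by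
    intro i hi
    have := congrFun (LinearMap.mem_ker.mp hc) ⟨i, hi⟩
    simpa [f, Matrix.mulVec, dotProduct] using this
  have hPP : ∀ i j : Fin N, ∑ l, P l i * P l j = if i = j then 1 else 0 := by
    intro i j
    have := congrFun (congrFun hP i) j
    simpa [Matrix.mul_apply, Matrix.one_apply] using this
  have hPx : ∀ i : Fin N, (Pᵀ *ᵥ x) i = ∑ j, (if i = Fin.castLE hk j then 1 else 0) * c j := by
    intro i
    have : Pᵀ *ᵥ x = (Pᵀ * P.submatrix id (Fin.castLE hk)) *ᵥ c := by
      rw [← Matrix.mulVec_mulVec]; rfl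
    rw [this]
    simp only [Matrix.mulVec, dotProduct, Matrix.mul_apply, Matrix.transpose_apply,
      Matrix.submatrix_apply, id, hPP]
  have hxP : ∀ i : Fin N, k < i → (Pᵀ *ᵥ x) i = 0 := by
    intro i hi
    rw [hPx]
    refine Finset.sum_eq_zero fun j _ => ?_
    rw [if_neg, zero_mul]
    rintro rfl
    have h1 := j.2
    have h2 : (k : ℕ) < j := hi
    omega
  have hxpos : 0 < ∑ i, x i ^ 2 := by
    rw [← sq_orth P hP]
    by_contra hcon
    have h0 : ∑ i, (Pᵀ *ᵥ x) i ^ 2 = 0 :=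
      le_antisymm (not_lt.mp hcon) (Finset.sum_nonneg fun i _ => sq_nonneg ((Pᵀ *ᵥ x) i))
    rw [Finset.sum_eq_zero_iff_of_nonneg (fun _ _ => sq_nonneg _)] at h0
    apply hc0
    ext j
    have := h0 (Fin.castLE hk j) (Finset.mem_univ _)
    rw [hPx] at this
    simpa [Fin.castLE_inj] using this
  have h1 : ν k * ∑ i, x i ^ 2 ≤ x ⬝ᵥ M' *ᵥ x := by
    rw [quad_diag M' P ν hP hPd, ← sq_orth P hP, Finset.mul_sum]
    refine Finset.sum_le_sum fun i _ => ?_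
    rcases lt_or_ge k i with h | h
    · simp [hxP i h]
    · exact mul_le_mul_of_nonneg_right (hν h) (sq_nonneg _)
  have h2 : x ⬝ᵥ M *ᵥ x ≤ φ k * ∑ i, x i ^ 2 := by
    rw [quad_diag M Q φ hQ hQd, ← sq_orth Q hQ, Finset.mul_sum]
    refine Finset.sum_le_sum fun i _ => ?_
    rcases lt_or_ge i k with h | h
    · simp [hxQ i h]
    · exact mul_le_mul_of_nonneg_right (hφ h) (sq_nonneg _)
  have h3 := le_of_abs_le (quad_le (M' - M) x)
  rw [Matrix.sub_mulVec, dotProduct_sub] at h3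
  by_contra hcon
  push Not at hcon
  nlinarith [mul_lt_mul_of_pos_right hcon hxpos]

theorem frobNorm_sub_comm {N : ℕ} (M M' : Matrix (Fin N) (Fin N) ℝ) :
    frobNorm (M - M') = frobNorm (M' - M) := by
  unfold frobNorm
  congr 1
  refine Finset.sum_congr rfl fun i _ => Finset.sum_congr rfl fun j _ => ?_
  simp only [Matrix.sub_apply]; ring

theorem dk {N : ℕ} (M M' Q P : Matrix (Fin N) (Fin N) ℝ) (φ ν : Fin N → ℝ)
    (hφ : Antitone φ) (hν : Antitone ν) (hM : M.IsSymm)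
    (hQ : Qᵀ * Q = 1) (hQd : M * Q = Q * Matrix.diagonal φ)
    (hP : Pᵀ * P = 1) (hPd : M' * P = P * Matrix.diagonal ν)
    (k : ℕ) (hk1 : k - 1 < N) (hk : k < N) (hk0 : 1 ≤ k) (g t : ℝ)
    (hg : g = φ ⟨k - 1, hk1⟩ - φ ⟨k, hk⟩) (hgpos : 0 < g)
    (ht : frobNorm (M' - M) ≤ t) (htg : t < g / 5) :
    ν ⟨k, hk⟩ < ν ⟨k - 1, hk1⟩ ∧
    specNorm ((Q.submatrix id (Fin.castLE hk.le)) * (Q.submatrix id (Fin.castLE hk.le))ᵀ -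
      (P.submatrix id (Fin.castLE hk.le)) * (P.submatrix id (Fin.castLE hk.le))ᵀ) ≤
      4 * t / g := by
  have w1 := weyl M M' Q P φ ν hφ hν hQ hQd hP hPd ⟨k, hk⟩
  have w2 := weyl M' M P Q ν φ hν hφ hP hPd hQ hQd ⟨k - 1, hk1⟩
  rw [frobNorm_sub_comm] at w2
  have ht0 : 0 ≤ t := (frobNorm_nonneg' _).trans ht
  refine ⟨by linarith, (specNorm_le_frob _).trans ?_⟩
  set Q₁ := Q.submatrix id (Fin.castLE hk.le) with hQ₁
  set P₁ := P.submatrix id (Fin.castLE hk.le) with hP₁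
  have hQ1 : Q₁ᵀ * Q₁ = 1 := by
    ext i j
    have := congrFun (congrFun hQ (Fin.castLE hk.le i)) (Fin.castLE hk.le j)
    simpa [Matrix.mul_apply, Matrix.one_apply, hQ₁] using this
  have hP1 : P₁ᵀ * P₁ = 1 := by
    ext i j
    have := congrFun (congrFun hP (Fin.castLE hk.le i)) (Fin.castLE hk.le j)
    simpa [Matrix.mul_apply, Matrix.one_apply, hP₁] using this
  let G := Qᵀ * P
  -- rows of G are normalized
  have hGG : ∀ i, ∑ j, G i j ^ 2 = 1 := by
    intro i
    have hP' : P * Pᵀ = 1 := mul_eq_one_comm.mp hP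
    have : G * Gᵀ = 1 := by
      simp only [G, Matrix.transpose_mul, Matrix.transpose_transpose]
      calc Qᵀ * P * (Pᵀ * Q) = Qᵀ * (P * Pᵀ) * Q := by simp only [Matrix.mul_assoc]
        _ = 1 := by rw [hP', Matrix.mul_one, hQ]
    have := congrFun (congrFun this i) i
    simpa [Matrix.mul_apply, sq] using this
  -- Frobenius norm of the difference
  have hF : frobNorm (Q₁ * Q₁ᵀ - P₁ * P₁ᵀ) ^ 2 =
      2 * k - 2 * ∑ i : Fin k, ∑ j : Fin k, G (Fin.castLE hk.le i) (Fin.castLE hk.le j) ^ 2 := by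
    rw [frobNorm_sq_trace]
    have e1 : (Q₁ * Q₁ᵀ - P₁ * P₁ᵀ)ᵀ * (Q₁ * Q₁ᵀ - P₁ * P₁ᵀ) =
        Q₁ * (Q₁ᵀ * Q₁) * Q₁ᵀ + P₁ * (P₁ᵀ * P₁) * P₁ᵀ - Q₁ * Q₁ᵀ * (P₁ * P₁ᵀ)
          - P₁ * P₁ᵀ * (Q₁ * Q₁ᵀ) := by
      simp only [Matrix.transpose_sub, Matrix.transpose_mul, Matrix.transpose_transpose,
        Matrix.sub_mul, Matrix.mul_sub, Matrix.mul_assoc]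
      abel
    have e2 : (Q₁ * Q₁ᵀ * (P₁ * P₁ᵀ)).trace =
        ∑ i : Fin k, ∑ j : Fin k, G (Fin.castLE hk.le i) (Fin.castLE hk.le j) ^ 2 := by
      have : (Q₁ * Q₁ᵀ * (P₁ * P₁ᵀ)).trace = ((P₁ᵀ * Q₁) * (Q₁ᵀ * P₁)).trace := by
        rw [← Matrix.mul_assoc, Matrix.trace_mul_comm]
        simp only [Matrix.mul_assoc]
      rw [this]
      have h3 : P₁ᵀ * Q₁ = (Q₁ᵀ * P₁)ᵀ := by simp
      rw [h3, ← frobNorm_sq_trace, frobNorm_sq']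
      rfl
    rw [e1, hQ1, hP1, Matrix.mul_one, Matrix.mul_one, Matrix.trace_sub, Matrix.trace_sub,
      Matrix.trace_add, Matrix.trace_mul_comm (P₁ * P₁ᵀ) (Q₁ * Q₁ᵀ), e2,
      Matrix.trace_mul_comm Q₁, Matrix.trace_mul_comm P₁, hQ1, hP1]
    simp
    ring
  -- entries
  have hE : ∀ i j, (Qᵀ * (M' - M) * P) i j = (ν j - φ i) * G i j := by
    intro i j
    have hQM : Qᵀ * M = Matrix.diagonal φ * Qᵀ := by
      have := congrArg Matrix.transpose hQd
      simpa [Matrix.transpose_mul, hM.eq] using this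
    have : Qᵀ * (M' - M) * P = G * Matrix.diagonal ν - Matrix.diagonal φ * G := by
      rw [Matrix.mul_sub, Matrix.sub_mul, Matrix.mul_assoc, hPd, hQM]
      simp only [G, Matrix.mul_assoc]
    rw [this, Matrix.sub_apply, Matrix.mul_diagonal, Matrix.diagonal_mul]
    ring
  -- bound
  have hb : ∀ i : Fin k, (4 / 5 * g) ^ 2 * (1 - ∑ j : Fin k, G (Fin.castLE hk.le i)
      (Fin.castLE hk.le j) ^ 2) ≤ ∑ j, (Qᵀ * (M' - M) * P) (Fin.castLE hk.le i) j ^ 2 := by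
    intro i
    have hs : ∑ j : Fin k, G (Fin.castLE hk.le i) (Fin.castLE hk.le j) ^ 2 =
        ∑ j : Fin N, if (j : ℕ) < k then G (Fin.castLE hk.le i) j ^ 2 else 0 := by
      rw [← Finset.sum_filter]
      refine Finset.sum_bij (fun j _ => Fin.castLE hk.le j) ?_ ?_ ?_ ?_
      · intro j _; simp
      · intro a _ b' _ h; exact Fin.castLE_injective _ h
      · intro j hj
        exact ⟨⟨j, by simpa using hj⟩, Finset.mem_univ _, rfl⟩
      · intro j _; rfl
    rw [hs, ← hGG (Fin.castLE hk.le i), ← Finset.sum_sub_distrib, Finset.mul_sum]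
    refine Finset.sum_le_sum fun j _ => ?_
    rw [hE]
    split_ifs with hj
    · simp only [sub_self, mul_zero]; positivity
    · rw [sub_zero, mul_pow (ν j - φ (Fin.castLE hk.le i))]
      refine mul_le_mul_of_nonneg_right ?_ (sq_nonneg (G (Fin.castLE hk.le i) j))
      have a1 : ν j ≤ ν ⟨k, hk⟩ := hν (by rw [Fin.le_def]; simpa using hj)
      have a2 : φ ⟨k - 1, hk1⟩ ≤ φ (Fin.castLE hk.le i) :=
        hφ (by rw [Fin.le_def]; have := i.2; simp; omega)
      have a3 : 4 / 5 * g ≤ φ (Fin.castLE hk.le i) - ν j := by linarith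
      have : 0 ≤ 4 / 5 * g := by positivity
      nlinarith
  have hsum : (4 / 5 * g) ^ 2 * (k - ∑ i : Fin k, ∑ j : Fin k, G (Fin.castLE hk.le i)
      (Fin.castLE hk.le j) ^ 2) ≤ t ^ 2 := by
    have h1 : ∑ i : Fin k, ∑ j, (Qᵀ * (M' - M) * P) (Fin.castLE hk.le i) j ^ 2 ≤
        ∑ i, ∑ j, (Qᵀ * (M' - M) * P) i j ^ 2 := by
      refine (Finset.sum_map Finset.univ (Fin.castLEEmb hk.le)
        (fun i => ∑ j, (Qᵀ * (M' - M) * P) i j ^ 2)).symm.le.trans ?_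
      exact Finset.sum_le_sum_of_subset_of_nonneg (Finset.subset_univ _)
        fun _ _ _ => Finset.sum_nonneg fun _ _ => sq_nonneg _
    rw [← frobNorm_sq', frobNorm_orth Q P _ hQ hP] at h1
    have h2 := Finset.sum_le_sum fun (i : Fin k) (_ : i ∈ Finset.univ) => hb i
    rw [← Finset.mul_sum, Finset.sum_sub_distrib] at h2
    simp only [Finset.sum_const, Finset.card_univ, Fintype.card_fin, nsmul_eq_mul, mul_one] at h2
    have h3 : frobNorm (M' - M) ^ 2 ≤ t ^ 2 := pow_le_pow_left₀ (frobNorm_nonneg' _) ht 2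
    linarith
  rw [le_div_iff₀ hgpos]
  refine le_of_sq_le_sq ?_ (by positivity)
  rw [mul_pow, hF]
  nlinarith [sq_nonneg t]

open Topology in
theorem kant {W : Type*} [NormedAddCommGroup W] [NormedSpace ℝ W] [CompleteSpace W]
    (J : W →ₗ[ℝ] W) (hJs : Function.Surjective J) (θ : ℝ) (hθ0 : 0 < θ)
    (hθ : ∀ w, ‖w‖ ≤ θ * ‖J w‖) (Q : W → W) (hQ0 : Q 0 = 0)
    (hQ : ∀ u v, ‖Q u - Q v‖ ≤ (‖u‖ + ‖v‖) / 2 * ‖u - v‖)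
    (κ : ℝ) (hκ0 : 0 ≤ κ) (hκ : 2 * κ * θ ^ 2 < 1) (t : ℝ)
    (ht : t = (1 - Real.sqrt (1 - 2 * κ * θ ^ 2)) / θ) :
    (0 ≤ t ∧ θ * t < 1) ∧ (∀ c, ‖c‖ ≤ κ → ∃ D, ‖D‖ ≤ t ∧ J D + Q D = c) ∧
    (∀ c c' D D', ‖D‖ ≤ t → ‖D'‖ ≤ t → J D + Q D = c → J D' + Q D' = c' →
      (1 - θ * t) * ‖D - D'‖ ≤ θ * ‖c - c'‖) := by
  set r := Real.sqrt (1 - 2 * κ * θ ^ 2) with hr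
  have hr2 : r ^ 2 = 1 - 2 * κ * θ ^ 2 := Real.sq_sqrt (by linarith)
  have hr0 : 0 < r := Real.sqrt_pos.mpr (by linarith)
  have hr1 : r ≤ 1 := Real.sqrt_le_one.mpr (by nlinarith [mul_nonneg hκ0 (sq_nonneg θ)])
  have hθt : θ * t = 1 - r := by rw [ht]; field_simp
  have ht0 : 0 ≤ t := by rw [ht]; exact div_nonneg (by linarith) hθ0.le
  have hfix : θ * κ + θ * (t ^ 2 / 2) = t := by
    have : θ * (θ * κ + θ * (t ^ 2 / 2)) = θ * t := by nlinarith
    exact mul_left_cancel₀ hθ0.ne' this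
  have hQt : ∀ u v, ‖u‖ ≤ t → ‖v‖ ≤ t → ‖Q u - Q v‖ ≤ t * ‖u - v‖ := fun u v hu hv =>
    (hQ u v).trans (mul_le_mul_of_nonneg_right (by linarith) (norm_nonneg _))
  have hQn : ∀ u, ‖u‖ ≤ t → ‖Q u‖ ≤ t ^ 2 / 2 := by
    intro u hu
    have := hQ u 0
    rw [hQ0, sub_zero, sub_zero, norm_zero, add_zero] at this
    nlinarith [norm_nonneg u]
  refine ⟨⟨ht0, by linarith⟩, ?_, ?_⟩
  · intro c hc
    choose K hK using hJs
    have hKl : ∀ a b, ‖K a - K b‖ ≤ θ * ‖a - b‖ := by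
      intro a b
      have := hθ (K a - K b)
      rwa [map_sub, hK, hK] at this
    have hKn : ∀ a, ‖K a‖ ≤ θ * ‖a‖ := fun a => by simpa [hK] using hθ (K a)
    let T : W → W := fun D => K (c - Q D)
    have hmaps : MapsTo T (Metric.closedBall 0 t) (Metric.closedBall 0 t) := by
      intro D hD
      rw [mem_closedBall_zero_iff] at hD ⊢
      have h1 := hKn (c - Q D)
      have h2 := norm_sub_le c (Q D)
      have h3 := hQn D hD
      have h4 : θ * ‖c - Q D‖ ≤ θ * (κ + t ^ 2 / 2) :=
        mul_le_mul_of_nonneg_left (by linarith) hθ0.le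
      calc ‖T D‖ ≤ θ * ‖c - Q D‖ := h1
        _ ≤ _ := h4
        _ = t := by rw [mul_add]; exact hfix
    have hcon : ContractingWith (Real.toNNReal (θ * t)) (hmaps.restrict T _ _) := by
      refine ⟨?_, LipschitzWith.of_dist_le_mul fun a b => ?_⟩
      · rw [Real.toNNReal_lt_one]; linarith
      · rw [Subtype.dist_eq, Subtype.dist_eq, dist_eq_norm, dist_eq_norm,
          Real.coe_toNNReal _ (by positivity)]
        have ha := mem_closedBall_zero_iff.mp a.2
        have hb := mem_closedBall_zero_iff.mp b.2
        have h1 := hKl (c - Q a) (c - Q b)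
        have h2 : c - Q a - (c - Q b) = -(Q a - Q b) := by abel
        rw [h2, norm_neg] at h1
        have h3 := mul_le_mul_of_nonneg_left (hQt a b ha hb) hθ0.le
        calc _ ≤ _ := h1
          _ ≤ _ := h3
          _ = θ * t * ‖(a : W) - b‖ := by ring
    obtain ⟨D, hD, hfixD, -⟩ := hcon.exists_fixedPoint' Metric.isClosed_closedBall.isComplete
      hmaps (x := 0) (by simp [ht0]) (edist_ne_top _ _)
    refine ⟨D, mem_closedBall_zero_iff.mp hD, ?_⟩
    have : J (T D) = J D := congrArg J hfixD
    simp only [T, hK] at this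
    rw [← this]; abel
  · intro c c' D D' hD hD' h h'
    have h1 := hθ (D - D')
    have h2 : J (D - D') = (c - c') - (Q D - Q D') := by
      rw [map_sub, ← h, ← h']; abel
    have h3 := norm_sub_le (c - c') (Q D - Q D')
    have h4 := hQt D D' hD hD'
    rw [h2] at h1
    have h5 : θ * ‖c - c' - (Q D - Q D')‖ ≤ θ * (‖c - c'‖ + t * ‖D - D'‖) :=
      mul_le_mul_of_nonneg_left (by linarith) hθ0.le
    linarith

theorem lyap_pd {N : ℕ} (X S : Matrix (Fin N) (Fin N) ℝ) (μ : ℝ) (hμ : 0 < μ)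
    (hX : X.IsSymm) (h : X * S + S * X = (2 * μ) • 1) (hq : ∀ x, 0 ≤ x ⬝ᵥ X *ᵥ x) :
    X.PosDef := by
  have hH : X.IsHermitian := by
    rw [Matrix.IsHermitian, Matrix.conjTranspose_eq_transpose_of_trivial]; exact hX
  have hps : X.PosSemidef := Matrix.PosSemidef.of_dotProduct_mulVec_nonneg hH
    (fun x => by simpa using hq x)
  refine Matrix.PosDef.of_dotProduct_mulVec_pos hH fun x hx => ?_
  refine lt_of_le_of_ne (by simpa using hq x) fun h0 => ?_
  have hx0 : X *ᵥ x = 0 := (hps.dotProduct_mulVec_zero_iff x).mp h0.symm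
  have h1 := congrArg (fun M => x ⬝ᵥ M *ᵥ x) h
  simp only [Matrix.add_mulVec, ← Matrix.mulVec_mulVec, hx0, Matrix.mulVec_zero, add_zero,
    Matrix.smul_mulVec, Matrix.one_mulVec, dotProduct_smul, smul_eq_mul] at h1
  rw [Matrix.dotProduct_mulVec, ← Matrix.mulVec_transpose, hX.eq, hx0, zero_dotProduct] at h1
  have h2 : 0 < x ⬝ᵥ x := by
    have := Matrix.dotProduct_star_self_pos_iff.mpr hx
    simpa using this
  nlinarith

theorem lyap_eq {N : ℕ} (X S : Matrix (Fin N) (Fin N) ℝ) (μ : ℝ)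
    (hS : S.IsSymm) (h : X * S + S * X = (2 * μ) • 1) (hX : X.PosDef) :
    S = μ • X⁻¹ := by
  have hu : IsUnit X.det := (Matrix.isUnit_iff_isUnit_det _).mp hX.isUnit
  have h1 : X * X⁻¹ = 1 := Matrix.mul_nonsing_inv _ hu
  have h2 : X⁻¹ * X = 1 := Matrix.nonsing_inv_mul _ hu
  set M := S - μ • X⁻¹ with hM
  have hMs : Mᴴ = M := by
    have := hX.inv.isHermitian.eq
    rw [Matrix.conjTranspose_eq_transpose_of_trivial] at this ⊢
    rw [hM, Matrix.transpose_sub, Matrix.transpose_smul, this, hS.eq]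
  have hL : X * M + M * X = 0 := by
    rw [hM, Matrix.mul_sub, Matrix.sub_mul, Matrix.mul_smul, Matrix.smul_mul, h1, h2]
    have : X * S - μ • 1 + (S * X - μ • 1) = (X * S + S * X) - (2 * μ) • 1 := by
      rw [two_mul, add_smul]; abel
    rw [this, h, sub_self]
  have ht : (Mᴴ * X * M).trace = 0 := by
    have h3 : (M * (X * M + M * X)).trace = 0 := by rw [hL]; simp
    rw [Matrix.mul_add, Matrix.trace_add, Matrix.trace_mul_comm M (M * X),
      ← Matrix.mul_assoc] at h3
    rw [hMs]; linarith
  have hps : (Mᴴ * X * M).PosSemidef := hX.posSemidef.conjTranspose_mul_mul_same M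
  have hz := hps.trace_eq_zero_iff.mp ht
  have hM0 : M = 0 := by
    ext i j
    by_contra hne
    have hv : M *ᵥ Pi.single j 1 ≠ 0 := fun h0 => hne (by simpa using congrFun h0 i)
    have := hX.dotProduct_mulVec_pos hv
    have h5 : star (M *ᵥ Pi.single j 1) ⬝ᵥ X *ᵥ (M *ᵥ Pi.single j 1) =
        star (Pi.single j (1 : ℝ)) ⬝ᵥ (Mᴴ * X * M) *ᵥ Pi.single j 1 := by
      rw [Matrix.star_mulVec, ← Matrix.dotProduct_mulVec]
      simp only [Matrix.mulVec_mulVec, Matrix.mul_assoc]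
    rw [h5, hz] at this
    simp at this
  exact sub_eq_zero.mp hM0

theorem frobNorm_zero_of_le {N : ℕ} : frobNorm (0 : Matrix (Fin N) (Fin N) ℝ) = 0 := by
  simp [frobNorm]

open Topology Filter in
theorem path_pd {N : ℕ} (X S : ℝ → Matrix (Fin N) (Fin N) ℝ) (μ : ℝ) (hμ : 0 < μ)
    (hc : ContinuousOn X (Icc 0 1)) (hX : ∀ s ∈ Icc (0 : ℝ) 1, (X s).IsSymm)
    (h : ∀ s ∈ Icc (0 : ℝ) 1, X s * S s + S s * X s = (2 * μ) • 1)
    (h0 : ∀ x, 0 ≤ x ⬝ᵥ X 0 *ᵥ x) : (X 1).PosDef := by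
  have key : Icc (0 : ℝ) 1 ⊆ {s | ∀ x, 0 ≤ x ⬝ᵥ X s *ᵥ x} := by
    apply IsClosed.Icc_subset_of_forall_mem_nhdsWithin
    · have hcl : IsClosed {M : Matrix (Fin N) (Fin N) ℝ | ∀ x, 0 ≤ x ⬝ᵥ M *ᵥ x} := by
        rw [Set.ofPred_forall]
        refine isClosed_iInter fun x => isClosed_le continuous_const ?_
        fun_prop
      have := hc.preimage_isClosed_of_isClosed isClosed_Icc hcl
      rwa [Set.inter_comm] at this
    · exact h0
    · rintro s ⟨hs, hs01⟩
      have hsI : s ∈ Icc (0 : ℝ) 1 := ⟨hs01.1, hs01.2.le⟩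
      have hpd := lyap_pd (X s) (S s) μ hμ (hX s hsI) (h s hsI) hs
      obtain ⟨ν, P, -, hP, hPd⟩ := exists_sorted (X s) (hX s hsI)
      have hν : ∀ i, 0 < ν i := by
        intro i
        have hcol : P *ᵥ Pi.single i 1 ≠ 0 := by
          intro h1
          have h2 := congrArg (fun v => Pᵀ *ᵥ v) h1
          simp only [Matrix.mulVec_mulVec, hP, Matrix.one_mulVec, Matrix.mulVec_zero] at h2
          simpa using congrFun h2 i
        have h3 := hpd.dotProduct_mulVec_pos hcol
        simp only [star_trivial] at h3
        rw [quad_diag _ P ν hP hPd, Matrix.mulVec_mulVec, hP, Matrix.one_mulVec] at h3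
        simpa [Pi.single_apply] using h3
      obtain ⟨c, hc0, hcν⟩ : ∃ c, 0 < c ∧ ∀ i, c ≤ ν i := by
        rcases isEmpty_or_nonempty (Fin N) with he | he
        · exact ⟨1, one_pos, fun i => he.elim i⟩
        · obtain ⟨i, hi⟩ := Finite.exists_min ν
          exact ⟨ν i, hν i, hi⟩
      have hcont : Tendsto (fun s' => frobNorm (X s' - X s)) (𝓝[Icc 0 1] s) (𝓝 0) := by
        have hf : Continuous (fun M : Matrix (Fin N) (Fin N) ℝ => frobNorm (M - X s)) := by
          unfold frobNorm
          simp only [Matrix.sub_apply]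
          fun_prop
        have := (hf.tendsto (X s)).comp (hc s hsI)
        simpa [frobNorm_zero_of_le, Function.comp_def] using this
      have hev := hcont.eventually (gt_mem_nhds hc0)
      have hle : 𝓝[>] s ≤ 𝓝[Icc 0 1] s := by
        rw [← nhdsWithin_Ioc_eq_nhdsGT hs01.2]
        exact nhdsWithin_mono _ fun u hu => ⟨hs01.1.trans hu.1.le, hu.2⟩
      filter_upwards [hle hev] with s' hs' x
      have q1 := neg_le_of_abs_le (quad_le (X s' - X s) x)
      rw [Matrix.sub_mulVec, dotProduct_sub] at q1
      have q2 : c * ∑ i, x i ^ 2 ≤ x ⬝ᵥ X s *ᵥ x := by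
        rw [quad_diag (X s) P ν hP hPd, ← sq_orth P hP, Finset.mul_sum]
        exact Finset.sum_le_sum fun i _ => mul_le_mul_of_nonneg_right (hcν i)
          (sq_nonneg ((Pᵀ *ᵥ x) i))
      have q3 : 0 ≤ ∑ i, x i ^ 2 := Finset.sum_nonneg fun i _ => sq_nonneg (x i)
      have hs'' : frobNorm (X s' - X s) < c := hs'
      nlinarith
  have h1 : (1 : ℝ) ∈ Icc (0 : ℝ) 1 := by simp
  exact lyap_pd (X 1) (S 1) μ hμ (hX 1 h1) (h 1 h1) (key h1)

abbrev KIdx (n m : ℕ) := (Fin n × Fin n) ⊕ (Fin m ⊕ (Fin n × Fin n))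
abbrev KSp (n m : ℕ) := EuclideanSpace ℝ (KIdx n m)

def kpack {n m : ℕ} (X : Matrix (Fin n) (Fin n) ℝ) (y : Fin m → ℝ)
    (S : Matrix (Fin n) (Fin n) ℝ) : KSp n m :=
  WithLp.toLp 2 (Sum.elim (fun p => X p.1 p.2) (Sum.elim y (fun p => S p.1 p.2)))

noncomputable def kX {n m : ℕ} (z : KSp n m) : Matrix (Fin n) (Fin n) ℝ :=
  Matrix.of fun i j => z (Sum.inl (i, j))
def kY {n m : ℕ} (z : KSp n m) : Fin m → ℝ := fun i => z (Sum.inr (Sum.inl i))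
def kS {n m : ℕ} (z : KSp n m) : Matrix (Fin n) (Fin n) ℝ :=
  Matrix.of fun i j => z (Sum.inr (Sum.inr (i, j)))

section kpacklemmas
variable {n m : ℕ}
@[simp] theorem kX_pack (X : Matrix (Fin n) (Fin n) ℝ) (y : Fin m → ℝ)
    (S : Matrix (Fin n) (Fin n) ℝ) : kX (kpack X y S) = X := rfl
@[simp] theorem kY_pack (X : Matrix (Fin n) (Fin n) ℝ) (y : Fin m → ℝ)
    (S : Matrix (Fin n) (Fin n) ℝ) : kY (kpack X y S) = y := rfl
@[simp] theorem kS_pack (X : Matrix (Fin n) (Fin n) ℝ) (y : Fin m → ℝ)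
    (S : Matrix (Fin n) (Fin n) ℝ) : kS (kpack X y S) = S := rfl
@[simp] theorem kX_add (u v : KSp n m) : kX (u + v) = kX u + kX v := rfl
@[simp] theorem kY_add (u v : KSp n m) : kY (u + v) = kY u + kY v := rfl
@[simp] theorem kS_add (u v : KSp n m) : kS (u + v) = kS u + kS v := rfl
@[simp] theorem kX_sub (u v : KSp n m) : kX (u - v) = kX u - kX v := rfl
@[simp] theorem kY_sub (u v : KSp n m) : kY (u - v) = kY u - kY v := rfl
@[simp] theorem kS_sub (u v : KSp n m) : kS (u - v) = kS u - kS v := rfl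
@[simp] theorem kX_smul (r : ℝ) (v : KSp n m) : kX (r • v) = r • kX v := rfl
@[simp] theorem kY_smul (r : ℝ) (v : KSp n m) : kY (r • v) = r • kY v := rfl
@[simp] theorem kS_smul (r : ℝ) (v : KSp n m) : kS (r • v) = r • kS v := rfl
@[simp] theorem kX_zero : kX (0 : KSp n m) = 0 := rfl
@[simp] theorem kY_zero : kY (0 : KSp n m) = 0 := rfl
@[simp] theorem kS_zero : kS (0 : KSp n m) = 0 := rfl

theorem k_ext {u v : KSp n m} (h1 : kX u = kX v) (h2 : kY u = kY v) (h3 : kS u = kS v) :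
    u = v := by
  ext i
  rcases i with ⟨i, j⟩ | i | ⟨i, j⟩
  · exact congrFun (congrFun h1 i) j
  · exact congrFun h2 i
  · exact congrFun (congrFun h3 i) j

theorem k_normsq (z : KSp n m) :
    ‖z‖ ^ 2 = frobNorm (kX z) ^ 2 + (∑ i, (kY z i) ^ 2) + frobNorm (kS z) ^ 2 := by
  rw [EuclideanSpace.norm_sq_eq, frobNorm_sq', frobNorm_sq', Fintype.sum_sum_type,
    Fintype.sum_sum_type, Fintype.sum_prod_type, Fintype.sum_prod_type]
  simp [kX, kY, kS, add_assoc]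

theorem k_norm (z : KSp n m) :
    ‖z‖ = Real.sqrt (frobNorm (kX z) ^ 2 + (∑ i, (kY z i) ^ 2) + frobNorm (kS z) ^ 2) := by
  rw [← k_normsq, Real.sqrt_sq (norm_nonneg _)]

/-- symmetric triples -/
def kW (n m : ℕ) : Submodule ℝ (KSp n m) where
  carrier := {z | (kX z).IsSymm ∧ (kS z).IsSymm}
  zero_mem' := ⟨by simp [Matrix.IsSymm], by simp [Matrix.IsSymm]⟩
  add_mem' := fun ha hb => ⟨ha.1.add hb.1, ha.2.add hb.2⟩
  smul_mem' := fun r _ ha => ⟨ha.1.smul r, ha.2.smul r⟩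

/-- the Jacobian on the symmetric triples -/
noncomputable def kJ (A : Fin m → Matrix (Fin n) (Fin n) ℝ) (hA : ∀ i, (A i).IsSymm)
    (X S : Matrix (Fin n) (Fin n) ℝ) (hX : X.IsSymm) (hS : S.IsSymm) :
    kW n m →ₗ[ℝ] kW n m where
  toFun z := ⟨kpack ((1 / 2 : ℝ) • (kX z.1 * S + S * kX z.1 + X * kS z.1 + kS z.1 * X))
      (fun i => ((A i) * kX z.1).trace) ((∑ i, kY z.1 i • A i) + kS z.1), by
    have h1 : (kX z.1)ᵀ = kX z.1 := z.2.1
    have h2 : (kS z.1)ᵀ = kS z.1 := z.2.2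
    constructor
    · simp only [kX_pack, Matrix.IsSymm, Matrix.transpose_smul, Matrix.transpose_add,
        Matrix.transpose_mul, h1, h2, hX.eq, hS.eq]
      congr 1; abel
    · simp only [kS_pack, Matrix.IsSymm, Matrix.transpose_add, h2, Matrix.transpose_sum,
        Matrix.transpose_smul, (hA _).eq]⟩
  map_add' u v := by
    apply Subtype.ext
    apply k_ext
    · simp only [kX_pack, Submodule.coe_add, kX_add, kS_add, Matrix.add_mul, Matrix.mul_add,
        ← smul_add]
      congr 1; abel
    · ext i; simp [Matrix.mul_add]
    · simp [add_smul, Finset.sum_add_distrib]; abel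
  map_smul' r u := by
    apply Subtype.ext
    apply k_ext
    · simp only [kX_pack, Submodule.coe_smul, kX_smul, kS_smul, Matrix.smul_mul, Matrix.mul_smul,
        ← smul_add, RingHom.id_apply]
      rw [smul_comm]
    · ext i; simp
    · simp [mul_smul, Finset.smul_sum]

noncomputable def kQ (z : kW n m) : kW n m :=
  ⟨kpack ((1 / 2 : ℝ) • (kX z.1 * kS z.1 + kS z.1 * kX z.1)) 0 0, by
    have h1 : (kX z.1)ᵀ = kX z.1 := z.2.1
    have h2 : (kS z.1)ᵀ = kS z.1 := z.2.2
    constructor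
    · simp only [kX_pack, Matrix.IsSymm, Matrix.transpose_smul, Matrix.transpose_add,
        Matrix.transpose_mul, h1, h2]
      congr 1; abel
    · simp [Matrix.IsSymm]⟩

theorem frob_mul (M M' : Matrix (Fin n) (Fin n) ℝ) :
    frobNorm (M * M') ≤ frobNorm M * frobNorm M' := by
  let _ := Matrix.frobeniusNormedRing (m := Fin n) (α := ℝ)
  have h : ∀ K : Matrix (Fin n) (Fin n) ℝ, frobNorm K = ‖K‖ := by
    intro K
    rw [Matrix.frobenius_norm_def, frobNorm, Real.sqrt_eq_rpow]
    simp
  rw [h, h, h]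
  exact Matrix.frobenius_norm_mul M M'

theorem frob_add (M M' : Matrix (Fin n) (Fin n) ℝ) :
    frobNorm (M + M') ≤ frobNorm M + frobNorm M' := by
  let _ := Matrix.frobeniusNormedRing (m := Fin n) (α := ℝ)
  have h : ∀ K : Matrix (Fin n) (Fin n) ℝ, frobNorm K = ‖K‖ := by
    intro K
    rw [Matrix.frobenius_norm_def, frobNorm, Real.sqrt_eq_rpow]
    simp
  rw [h, h, h]
  exact norm_add_le M M'

theorem frob_smul (r : ℝ) (M : Matrix (Fin n) (Fin n) ℝ) :
    frobNorm (r • M) = |r| * frobNorm M := by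
  unfold frobNorm
  rw [← Real.sqrt_sq_eq_abs, ← Real.sqrt_mul (sq_nonneg r), Finset.mul_sum]
  congr 1
  refine Finset.sum_congr rfl fun i _ => ?_
  rw [Finset.mul_sum]
  refine Finset.sum_congr rfl fun j _ => ?_
  simp [mul_pow]

theorem kQ_lip (u v : kW n m) : ‖kQ u - kQ v‖ ≤ (‖u‖ + ‖v‖) / 2 * ‖u - v‖ := by
  set d := u - v with hd
  set s := u + v with hs
  have hn : ‖kQ u - kQ v‖ = frobNorm ((1 / 2 : ℝ) • (kX u.1 * kS u.1 + kS u.1 * kX u.1) -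
      (1 / 2 : ℝ) • (kX v.1 * kS v.1 + kS v.1 * kX v.1)) := by
    change ‖(kQ u).1 - (kQ v).1‖ = _
    rw [k_norm]
    simp only [kQ, kX_sub, kY_sub, kS_sub, kX_pack, kY_pack, kS_pack, sub_self,
      frobNorm_zero_of_le]
    simp [Real.sqrt_sq (frobNorm_nonneg' _)]
  have he : (1 / 2 : ℝ) • (kX u.1 * kS u.1 + kS u.1 * kX u.1) -
      (1 / 2 : ℝ) • (kX v.1 * kS v.1 + kS v.1 * kX v.1) =
      (1 / 4 : ℝ) • ((kX d.1 * kS s.1 + kX s.1 * kS d.1) +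
        (kS s.1 * kX d.1 + kS d.1 * kX s.1)) := by
    have e1 : kX d.1 = kX u.1 - kX v.1 := rfl
    have e2 : kS d.1 = kS u.1 - kS v.1 := rfl
    have e3 : kX s.1 = kX u.1 + kX v.1 := rfl
    have e4 : kS s.1 = kS u.1 + kS v.1 := rfl
    rw [e1, e2, e3, e4]
    simp only [Matrix.sub_mul, Matrix.mul_sub, Matrix.add_mul, Matrix.mul_add]
    module
  rw [hn, he, frob_smul]
  have b1 := frob_add (kX d.1 * kS s.1 + kX s.1 * kS d.1) (kS s.1 * kX d.1 + kS d.1 * kX s.1)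
  have b2 := frob_add (kX d.1 * kS s.1) (kX s.1 * kS d.1)
  have b3 := frob_add (kS s.1 * kX d.1) (kS d.1 * kX s.1)
  have m1 := frob_mul (kX d.1) (kS s.1)
  have m2 := frob_mul (kX s.1) (kS d.1)
  have m3 := frob_mul (kS s.1) (kX d.1)
  have m4 := frob_mul (kS d.1) (kX s.1)
  have hns : ‖s‖ ≤ ‖u‖ + ‖v‖ := norm_add_le u v
  have hcs : frobNorm (kX d.1) * frobNorm (kS s.1) + frobNorm (kX s.1) * frobNorm (kS d.1) ≤
      ‖s‖ * ‖d‖ := by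
    refine le_of_sq_le_sq ?_ (by positivity)
    have n1 : ‖s‖ ^ 2 = _ := k_normsq s.1
    have n2 : ‖d‖ ^ 2 = _ := k_normsq d.1
    have y1 : 0 ≤ ∑ i, (kY s.1 i) ^ 2 := Finset.sum_nonneg fun i _ => sq_nonneg _
    have y2 : 0 ≤ ∑ i, (kY d.1 i) ^ 2 := Finset.sum_nonneg fun i _ => sq_nonneg _
    have l1 : frobNorm (kX s.1) ^ 2 + frobNorm (kS s.1) ^ 2 ≤ ‖s‖ ^ 2 := by rw [n1]; linarith
    have l2 : frobNorm (kX d.1) ^ 2 + frobNorm (kS d.1) ^ 2 ≤ ‖d‖ ^ 2 := by rw [n2]; linarith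
    have l3 := mul_le_mul l1 l2 (by positivity) (by positivity)
    rw [mul_pow]
    nlinarith [sq_nonneg (frobNorm (kX d.1) * frobNorm (kX s.1) -
      frobNorm (kS s.1) * frobNorm (kS d.1))]
  have hfin : ‖s‖ * ‖d‖ ≤ (‖u‖ + ‖v‖) * ‖d‖ := mul_le_mul_of_nonneg_right hns (norm_nonneg _)
  rw [abs_of_pos (by norm_num : (0 : ℝ) < 1 / 4)]
  linarith

theorem theta_bound (A : Fin m → Matrix (Fin n) (Fin n) ℝ)
    (X S : Matrix (Fin n) (Fin n) ℝ) (hne : thetaMu A X S ≠ 0) :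
    0 < thetaMu A X S ∧ ∀ (DX DS : Matrix (Fin n) (Fin n) ℝ) (Dy : Fin m → ℝ),
    DX.IsSymm → DS.IsSymm →
    Real.sqrt (frobNorm DX ^ 2 + (∑ i, (Dy i) ^ 2) + frobNorm DS ^ 2) ≤
      thetaMu A X S * Real.sqrt ((∑ i, (((A i) * DX).trace) ^ 2) +
        frobNorm ((∑ i, Dy i • A i) + DS) ^ 2 +
        frobNorm ((1 / 2 : ℝ) • (DX * S + S * DX + X * DS + DS * X)) ^ 2) := by
  have hnem : {t : ℝ | 0 ≤ t ∧ ∀ (DX DS : Matrix (Fin n) (Fin n) ℝ) (Dy : Fin m → ℝ),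
    DX.IsSymm → DS.IsSymm →
    Real.sqrt (frobNorm DX ^ 2 + (∑ i, (Dy i) ^ 2) + frobNorm DS ^ 2) ≤
      t * Real.sqrt ((∑ i, (((A i) * DX).trace) ^ 2) +
        frobNorm ((∑ i, Dy i • A i) + DS) ^ 2 +
        frobNorm ((1 / 2 : ℝ) • (DX * S + S * DX + X * DS + DS * X)) ^ 2)}.Nonempty := by
    by_contra hcon
    apply hne
    rw [thetaMu, Set.not_nonempty_iff_eq_empty.mp hcon, Real.sInf_empty]
  refine ⟨lt_of_le_of_ne (Real.sInf_nonneg fun t ht => ht.1) hne.symm, ?_⟩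
  intro DX DS Dy h1 h2
  set a := Real.sqrt (frobNorm DX ^ 2 + (∑ i, (Dy i) ^ 2) + frobNorm DS ^ 2)
  rcases (Real.sqrt_nonneg ((∑ i, (((A i) * DX).trace) ^ 2) +
        frobNorm ((∑ i, Dy i • A i) + DS) ^ 2 +
        frobNorm ((1 / 2 : ℝ) • (DX * S + S * DX + X * DS + DS * X)) ^ 2)).eq_or_lt with h | h
  · obtain ⟨t, ht⟩ := hnem
    have := ht.2 DX DS Dy h1 h2
    rw [← h] at this ⊢
    simpa using this
  · rw [← div_le_iff₀ h]
    exact le_csInf hnem fun t ht => (div_le_iff₀ h).mpr (ht.2 DX DS Dy h1 h2)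

end kpacklemmas

set_option maxHeartbeats 2000000

/-- sensitivity of the approximation of the optimal partition:
the dominant eigenspaces of the perturbed central solution stay close to those of the
unperturbed one. -/
theorem stmt12 {n m : ℕ} (C Cbar : Matrix (Fin n) (Fin n) ℝ)
    (A : Fin m → Matrix (Fin n) (Fin n) ℝ) (b : Fin m → ℝ)
    (hSA : StandingAssumptions C Cbar A b) (hCbar0 : Cbar ≠ 0)
    (μ : ℝ) (hμ : 0 < μ)
    (Xμ Sμ : Matrix (Fin n) (Fin n) ℝ) (yμ : Fin m → ℝ)
    (hcent : CentralSol C Cbar A b 0 μ Xμ yμ Sμ)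
    (Xs Ss : Matrix (Fin n) (Fin n) ℝ) (ys : Fin m → ℝ)
    (hmc : MaxComp C Cbar A b 0 Xs ys Ss)
    (nB nT nN : ℕ)
    (hnB : nB = Module.finrank ℝ (LinearMap.range Xs.mulVecLin))
    (hnN : nN = Module.finrank ℝ (LinearMap.range Ss.mulVecLin))
    (hnT : nB + nT + nN = n)
    (hnB1 : 1 ≤ nB) (hnBn : nB < n) (hnN1 : 1 ≤ nN) (hnNn : nN < n)
    (φ ψ : Fin n → ℝ) (hφ : Antitone φ) (hψ : Antitone ψ)
    (QX QS : Matrix (Fin n) (Fin n) ℝ)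
    (hQXorth : QXᵀ * QX = 1) (hQXd : Xμ * QX = QX * Matrix.diagonal φ)
    (hQSorth : QSᵀ * QS = 1) (hQSd : Sμ * QS = QS * Matrix.diagonal ψ)
    (δ θ : ℝ)
    (hδ : δ = sInf ((fun i : Fin n => φ i) '' {i : Fin n | (i : ℕ) < nB + nT} ∪
      (fun i : Fin n => ψ i) '' {i : Fin n | (i : ℕ) < nN}))
    (hθ : θ = thetaMu A Xμ Sμ)
    (gX gS : ℝ)
    (hgX : gX = φ ⟨nB - 1, by omega⟩ - φ ⟨nB, hnBn⟩) (hgXpos : 0 < gX)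
    (hgS : gS = ψ ⟨nN - 1, by omega⟩ - ψ ⟨nN, hnNn⟩) (hgSpos : 0 < gS)
    (ε : ℝ)
    (hε : |ε| < (1 / (θ * frobNorm Cbar)) *
      min (min (δ / 2) (1 / (2 * θ))) (min (gX / 10) (gS / 10))) :
    ∃ (Xε Sε : Matrix (Fin n) (Fin n) ℝ) (yε : Fin m → ℝ),
      CentralSol C Cbar A b ε μ Xε yε Sε ∧
      ∃ (ν ζ : Fin n → ℝ) (PX PS : Matrix (Fin n) (Fin n) ℝ),
        Antitone ν ∧ Antitone ζ ∧ PXᵀ * PX = 1 ∧ PSᵀ * PS = 1 ∧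
        Xε * PX = PX * Matrix.diagonal ν ∧ Sε * PS = PS * Matrix.diagonal ζ ∧
        -- the `n_B` (resp. `n_N`) largest eigenvalues are strictly larger than the rest
        ν ⟨nB, hnBn⟩ < ν ⟨nB - 1, by omega⟩ ∧
        ζ ⟨nN, hnNn⟩ < ζ ⟨nN - 1, by omega⟩ ∧
        specNorm ((QX.submatrix id (Fin.castLE hnBn.le)) *
              (QX.submatrix id (Fin.castLE hnBn.le))ᵀ -
            (PX.submatrix id (Fin.castLE hnBn.le)) *
              (PX.submatrix id (Fin.castLE hnBn.le))ᵀ) ≤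
          4 * (1 - Real.sqrt (1 - 2 * |ε| * θ ^ 2 * frobNorm Cbar)) / (θ * gX) ∧
        specNorm ((QS.submatrix id (Fin.castLE hnNn.le)) *
              (QS.submatrix id (Fin.castLE hnNn.le))ᵀ -
            (PS.submatrix id (Fin.castLE hnNn.le)) *
              (PS.submatrix id (Fin.castLE hnNn.le))ᵀ) ≤
          4 * (1 - Real.sqrt (1 - 2 * |ε| * θ ^ 2 * frobNorm Cbar)) / (θ * gS) := by
  obtain ⟨hC, hCb, hA, -, -⟩ := hSA
  obtain ⟨⟨hXs, hXb, hXp⟩, ⟨hSs, hSd, hSp⟩, hXS⟩ := hcent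
  have hXpq : ∀ x, 0 ≤ x ⬝ᵥ Xμ *ᵥ x := fun x => by
    simpa using hXp.dotProduct_mulVec_nonneg x
  have hSX : Sμ * Xμ = μ • (1 : Matrix (Fin n) (Fin n) ℝ) := by
    have := congrArg Matrix.transpose hXS
    simpa [Matrix.transpose_mul, hXs.eq, hSs.eq] using this
  have hθ0' : θ ≠ 0 := by
    rintro h0
    rw [h0] at hε
    simp only [zero_mul, div_zero] at hε
    exact absurd hε (not_lt.mpr (abs_nonneg ε))
  obtain ⟨hθ0, hθb⟩ := theta_bound A Xμ Sμ (hθ ▸ hθ0')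
  rw [← hθ] at hθ0 hθb
  have hCpos : 0 < frobNorm Cbar := by
    refine lt_of_le_of_ne (frobNorm_nonneg' _) fun h0 => ?_
    rw [← h0] at hε
    simp only [mul_zero, div_zero, zero_mul] at hε
    exact absurd hε (not_lt.mpr (abs_nonneg ε))
  set κ := |ε| * frobNorm Cbar with hκ
  have hκ0 : 0 ≤ κ := by positivity
  have hε' : κ * θ < min (min (δ / 2) (1 / (2 * θ))) (min (gX / 10) (gS / 10)) := by
    rw [one_div, ← div_eq_inv_mul, lt_div_iff₀ (by positivity)] at hε
    calc κ * θ = |ε| * (θ * frobNorm Cbar) := by rw [hκ]; ring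
      _ < _ := hε
  have k1 : κ * θ < 1 / (2 * θ) := (hε'.trans_le (min_le_left _ _)).trans_le (min_le_right _ _)
  have k2 : κ * θ < gX / 10 := (hε'.trans_le (min_le_right _ _)).trans_le (min_le_left _ _)
  have k3 : κ * θ < gS / 10 := (hε'.trans_le (min_le_right _ _)).trans_le (min_le_right _ _)
  have hκ1 : 2 * κ * θ ^ 2 < 1 := by
    rw [lt_div_iff₀ (by positivity)] at k1
    nlinarith
  set t := (1 - Real.sqrt (1 - 2 * κ * θ ^ 2)) / θ with ht
  let J := kJ A hA Xμ Sμ hXs hSs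
  have hJθ : ∀ w, ‖w‖ ≤ θ * ‖J w‖ := by
    intro w
    have h1 := hθb (kX w.1) (kS w.1) (kY w.1) w.2.1 w.2.2
    rw [← k_norm] at h1
    have h2 : ‖J w‖ = Real.sqrt ((∑ i, (((A i) * kX w.1).trace) ^ 2) +
        frobNorm ((∑ i, kY w.1 i • A i) + kS w.1) ^ 2 +
        frobNorm ((1 / 2 : ℝ) • (kX w.1 * Sμ + Sμ * kX w.1 + Xμ * kS w.1 + kS w.1 * Xμ)) ^ 2) := by
      change ‖(J w).1‖ = _
      rw [k_norm]
      congr 1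
      change frobNorm ((1 / 2 : ℝ) • (kX w.1 * Sμ + Sμ * kX w.1 + Xμ * kS w.1 + kS w.1 * Xμ)) ^ 2 +
        (∑ i, (((A i) * kX w.1).trace) ^ 2) +
        frobNorm ((∑ i, kY w.1 i • A i) + kS w.1) ^ 2 = _
      ring
    rw [h2]
    exact h1
  have hJinj : Function.Injective J := by
    rw [injective_iff_map_eq_zero]
    intro w hw
    have := hJθ w
    rw [hw, norm_zero, mul_zero] at this
    exact norm_le_zero_iff.mp this
  have hJs : Function.Surjective J := LinearMap.injective_iff_surjective.mp hJinj
  have hQ0 : kQ (0 : kW n m) = 0 := by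
    apply Subtype.ext
    apply k_ext <;> simp [kQ]
  obtain ⟨⟨ht0, hθt⟩, hex, hlip⟩ := kant J hJs θ hθ0 hJθ kQ hQ0 kQ_lip κ hκ0 hκ1 t ht
  let c : kW n m := ⟨kpack 0 0 (ε • Cbar), by simp [Matrix.IsSymm], by
    simpa using hCb.smul ε⟩
  have hcn : ‖c‖ = κ := by
    change ‖c.1‖ = _
    rw [k_norm]
    simp only [c, kX_pack, kY_pack, kS_pack, frobNorm_zero_of_le, frob_smul]
    rw [← hκ]
    simp [Real.sqrt_sq hκ0]
  have hexs : ∀ s ∈ Icc (0 : ℝ) 1, ∃ D : kW n m, ‖D‖ ≤ t ∧ J D + kQ D = s • c := by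
    intro s hs
    refine hex _ ?_
    rw [norm_smul, hcn, Real.norm_eq_abs, abs_of_nonneg hs.1]
    nlinarith [hs.2]
  choose! D hDt hDe using hexs
  have hDc : ContinuousOn D (Icc 0 1) := by
    have hpos : 0 < 1 - θ * t := by linarith
    refine LipschitzOnWith.continuousOn (K := Real.toNNReal (θ * κ / (1 - θ * t))) ?_
    refine LipschitzOnWith.of_dist_le_mul fun s hs s' hs' => ?_
    rw [dist_eq_norm, dist_eq_norm, Real.coe_toNNReal _ (by positivity)]
    have h1 := hlip _ _ _ _ (hDt s hs) (hDt s' hs') (hDe s hs) (hDe s' hs')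
    rw [← sub_smul, norm_smul, hcn] at h1
    rw [div_mul_eq_mul_div, le_div_iff₀ hpos]
    linarith
  have h00 : (0 : ℝ) ∈ Icc (0 : ℝ) 1 := by simp
  have h11 : (1 : ℝ) ∈ Icc (0 : ℝ) 1 := by simp
  have hD0 : D 0 = 0 := by
    have h1 := hlip _ 0 _ 0 (hDt 0 h00) (by simpa using ht0) (hDe 0 h00) (by simp [hQ0])
    rw [zero_smul, sub_zero, sub_zero, norm_zero, mul_zero] at h1
    have h2 : ‖D 0‖ ≤ 0 := by
      by_contra hcon
      push Not at hcon
      have : 0 < (1 - θ * t) * ‖D 0‖ := mul_pos (by linarith) hcon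
      linarith
    exact norm_le_zero_iff.mp h2
  -- components of the equation
  have hcomp : ∀ s ∈ Icc (0 : ℝ) 1,
      (1 / 2 : ℝ) • (kX (D s).1 * Sμ + Sμ * kX (D s).1 + Xμ * kS (D s).1 + kS (D s).1 * Xμ) +
        (1 / 2 : ℝ) • (kX (D s).1 * kS (D s).1 + kS (D s).1 * kX (D s).1) = 0 := by
    intro s hs
    have := congrArg (fun z : kW n m => kX z.1) (hDe s hs)
    refine Eq.trans ?_ (this.trans ?_)
    · rfl
    · exact smul_zero s
  have hdual : (∑ i, kY (D 1).1 i • A i) + kS (D 1).1 = ε • Cbar := by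
    have := congrArg (fun z : kW n m => kS z.1) (hDe 1 h11)
    rw [one_smul] at this
    refine Eq.trans ?_ (this.trans rfl)
    exact (add_zero _).symm
  have hprim : ∀ i, ((A i) * kX (D 1).1).trace = 0 := by
    intro i
    have := congrArg (fun z : kW n m => kY z.1 i) (hDe 1 h11)
    rw [one_smul] at this
    refine Eq.trans ?_ (this.trans rfl)
    exact (add_zero _).symm
  let X : ℝ → Matrix (Fin n) (Fin n) ℝ := fun s => Xμ + kX (D s).1
  let S : ℝ → Matrix (Fin n) (Fin n) ℝ := fun s => Sμ + kS (D s).1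
  have hXsym : ∀ s, (X s).IsSymm := fun s => hXs.add (D s).2.1
  have hSsym : ∀ s, (S s).IsSymm := fun s => hSs.add (D s).2.2
  have hlyap : ∀ s ∈ Icc (0 : ℝ) 1, X s * S s + S s * X s = (2 * μ) • 1 := by
    intro s hs
    have h1 := hcomp s hs
    rw [← smul_add, smul_eq_zero_iff_right (by norm_num)] at h1
    have h2 : X s * S s + S s * X s = (Xμ * Sμ + Sμ * Xμ) +
        (kX (D s).1 * Sμ + Sμ * kX (D s).1 + Xμ * kS (D s).1 + kS (D s).1 * Xμ +
          (kX (D s).1 * kS (D s).1 + kS (D s).1 * kX (D s).1)) := by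
      simp only [X, S, Matrix.add_mul, Matrix.mul_add]
      abel
    rw [h2, h1, add_zero, hXS, hSX, two_mul, add_smul]
  have hXc : ContinuousOn X (Icc 0 1) := by
    have hk : Continuous (fun z : kW n m => Xμ + kX z.1) := by
      refine continuous_const.add ?_
      refine continuous_matrix fun i j => ?_
      change Continuous fun z : kW n m => z.1 (Sum.inl (i, j))
      fun_prop
    exact hk.comp_continuousOn hDc
  have hpd : (X 1).PosDef := by
    refine path_pd X S μ hμ hXc (fun s _ => hXsym s) hlyap ?_
    have : X 0 = Xμ := by simp [X, hD0]
    rw [this]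
    exact hXpq
  have hS1 : S 1 = μ • (X 1)⁻¹ := lyap_eq (X 1) (S 1) μ (hSsym 1) (hlyap 1 h11) hpd
  have hdet : IsUnit (X 1).det := (Matrix.isUnit_iff_isUnit_det _).mp hpd.isUnit
  have nD : ‖D 1‖ ^ 2 = _ := k_normsq (D 1).1
  have hsy : 0 ≤ ∑ i, (kY (D 1).1 i) ^ 2 := Finset.sum_nonneg fun i _ => sq_nonneg _
  have hEX : frobNorm (X 1 - Xμ) ≤ t := by
    refine le_trans ?_ (hDt 1 h11)
    refine le_of_sq_le_sq ?_ (norm_nonneg _)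
    rw [nD]
    have : X 1 - Xμ = kX (D 1).1 := by simp [X]
    rw [this]
    nlinarith [sq_nonneg (frobNorm (kS (D 1).1))]
  have hES : frobNorm (S 1 - Sμ) ≤ t := by
    refine le_trans ?_ (hDt 1 h11)
    refine le_of_sq_le_sq ?_ (norm_nonneg _)
    rw [nD]
    have : S 1 - Sμ = kS (D 1).1 := by simp [S]
    rw [this]
    nlinarith [sq_nonneg (frobNorm (kX (D 1).1))]
  have htκ : t ≤ 2 * (κ * θ) := by
    rw [ht, div_le_iff₀ hθ0]
    have hr2 : Real.sqrt (1 - 2 * κ * θ ^ 2) ^ 2 = 1 - 2 * κ * θ ^ 2 :=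
      Real.sq_sqrt (by linarith)
    have hr1 : Real.sqrt (1 - 2 * κ * θ ^ 2) ≤ 1 :=
      Real.sqrt_le_one.mpr (by nlinarith [mul_nonneg hκ0 (sq_nonneg θ)])
    nlinarith [Real.sqrt_nonneg (1 - 2 * κ * θ ^ 2)]
  obtain ⟨ν, PX, hν, hPX, hPXd⟩ := exists_sorted (X 1) (hXsym 1)
  obtain ⟨ζ, PS, hζ, hPS, hPSd⟩ := exists_sorted (S 1) (hSsym 1)
  obtain ⟨r1, r2⟩ := dk Xμ (X 1) QX PX φ ν hφ hν hXs hQXorth hQXd hPX hPXd nB (by omega) hnBn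
    hnB1 gX t hgX hgXpos hEX (by linarith)
  obtain ⟨r3, r4⟩ := dk Sμ (S 1) QS PS ψ ζ hψ hζ hSs hQSorth hQSd hPS hPSd nN (by omega) hnNn
    hnN1 gS t hgS hgSpos hES (by linarith)
  have hrw : ∀ g : ℝ, 4 * (1 - Real.sqrt (1 - 2 * |ε| * θ ^ 2 * frobNorm Cbar)) / (θ * g) =
      4 * t / g := by
    intro g
    have : 2 * |ε| * θ ^ 2 * frobNorm Cbar = 2 * κ * θ ^ 2 := by rw [hκ]; ring
    rw [this, ht, ← mul_div_assoc, div_div]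
  refine ⟨X 1, S 1, yμ + kY (D 1).1, ⟨⟨hXsym 1, ?_, hpd.posSemidef⟩,
    ⟨hSsym 1, ?_, ?_⟩, ?_⟩, ν, ζ, PX, PS, hν, hζ, hPX, hPS, hPXd, hPSd, r1, r3, ?_, ?_⟩
  · intro i
    simp only [X, Matrix.mul_add, Matrix.trace_add, hXb, hprim, add_zero]
  · have : ∑ i, (yμ + kY (D 1).1) i • A i + S 1 =
        (∑ i, yμ i • A i + Sμ) + ((∑ i, kY (D 1).1 i • A i) + kS (D 1).1) := by
      simp only [S, Pi.add_apply, add_smul, Finset.sum_add_distrib]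
      abel
    rw [this, hSd, hdual, zero_smul, add_zero]
  · rw [hS1]
    exact hpd.inv.posSemidef.smul hμ.le
  · rw [hS1, Matrix.mul_smul, Matrix.mul_nonsing_inv _ hdet]
  · rw [hrw]; exact r2
  · rw [hrw]; exact r4
end

section
/- There exist constants c > 0, μ̂ > 0 and an exponent γ with γ ≥ 2^{1−n} such that for every 0 < μ ≤ μ̂ the central solution (X^μ, y^μ, S^μ) at ε = 0 satisfies dist(X^μ, P*(0)) ≤ c (n μ)^γ and dist(S^μ, {S : (y,S) ∈ D*(0) for some y}) ≤ c (n μ)^γ, where dist denotes the Frobenius-norm distance from a matrix to a set of matrices. -/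
open Matrix Set

section HB
open scoped Matrix.Norms.Frobenius

theorem hb_spectral {ι : Type} [Fintype ι] [DecidableEq ι] (S : Matrix ι ι ℝ) (hS : S.PosSemidef) :
    ∃ (W : Matrix ι ι ℝ) (d : ι → ℝ), W * Wᵀ = 1 ∧ Wᵀ * W = 1 ∧ S = W * diagonal d * Wᵀ ∧
      ∀ i, 0 ≤ d i := by
  refine ⟨(hS.1.eigenvectorUnitary : Matrix ι ι ℝ), hS.1.eigenvalues, ?_, ?_, ?_,
    hS.eigenvalues_nonneg⟩
  · have := Unitary.coe_mul_star_self hS.1.eigenvectorUnitary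
    simpa [star_eq_conjTranspose] using this
  · have := Unitary.coe_star_mul_self hS.1.eigenvectorUnitary
    simpa [star_eq_conjTranspose] using this
  · have := hS.1.spectral_theorem
    rw [Unitary.conjStarAlgAut_apply] at this
    simpa [star_eq_conjTranspose, Function.comp_def] using this

theorem hb_factor {ι : Type} [Fintype ι] [DecidableEq ι] (S : Matrix ι ι ℝ) (hS : S.PosSemidef) :
    ∃ B : Matrix ι ι ℝ, S = Bᵀ * B := by
  obtain ⟨W, d, h1, h2, h3, h4⟩ := hb_spectral S hS
  refine ⟨diagonal (fun i => Real.sqrt (d i)) * Wᵀ, ?_⟩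
  rw [transpose_mul, diagonal_transpose, transpose_transpose, Matrix.mul_assoc,
    ← Matrix.mul_assoc (diagonal _) (diagonal _), diagonal_mul_diagonal]
  simp only [Real.mul_self_sqrt (h4 _)]
  rw [h3, Matrix.mul_assoc]

/-- kernel decomposition -/
theorem hb_kernel {ι : Type} [Fintype ι] [DecidableEq ι] (S : Matrix ι ι ℝ) (hS : S.PosSemidef)
    (h0 : S ≠ 0) : ∃ (κ : Type) (_ : Fintype κ) (_ : DecidableEq κ) (U : Matrix ι κ ℝ)
      (G : Matrix ι ι ℝ), Fintype.card κ < Fintype.card ι ∧ 1 = U * Uᵀ + G * S := by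
  obtain ⟨W, d, h1, h2, h3, h4⟩ := hb_spectral S hS
  refine ⟨{i // d i = 0}, inferInstance, inferInstance, W.submatrix id Subtype.val,
    W * diagonal (fun i => (d i)⁻¹) * Wᵀ, ?_, ?_⟩
  · have : ∃ i, d i ≠ 0 := by
      by_contra hh
      push Not at hh
      apply h0
      have : d = 0 := funext hh
      rw [h3, this]; simp
    obtain ⟨i, hi⟩ := this
    exact Fintype.card_subtype_lt hi
  · have e1 : W.submatrix id (Subtype.val : {i // d i = 0} → ι) *
        (W.submatrix id (Subtype.val : {i // d i = 0} → ι))ᵀ =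
        W * diagonal (fun i => if d i = 0 then 1 else 0) * Wᵀ := by
      ext i j
      rw [Matrix.mul_apply, Matrix.mul_apply]
      simp only [mul_diagonal, transpose_apply, submatrix_apply, id]
      simp only [mul_ite, mul_one, mul_zero, ite_mul, zero_mul]
      rw [← Finset.sum_filter, Finset.sum_subtype (p := fun i => d i = 0)]
      simp
    have e2 : W * diagonal (fun i => (d i)⁻¹) * Wᵀ * S =
        W * diagonal (fun i => if d i = 0 then 0 else 1) * Wᵀ := by
      rw [h3]
      calc _ = W * diagonal (fun i => (d i)⁻¹) * (Wᵀ * W) * diagonal d * Wᵀ := by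
            simp only [Matrix.mul_assoc]
        _ = _ := by
          rw [h2, Matrix.mul_one, Matrix.mul_assoc W, diagonal_mul_diagonal]
          congr 3
          ext i
          by_cases h : d i = 0 <;> simp [h]
    rw [e1, e2, ← Matrix.add_mul, ← Matrix.mul_add, diagonal_add]
    have : (diagonal fun i => (if d i = 0 then (1:ℝ) else 0) + (if d i = 0 then 0 else 1)) =
        (1 : Matrix ι ι ℝ) := by
      rw [← diagonal_one]; congr 1; ext i; split_ifs <;> simp
    rw [this, Matrix.mul_one, h1]

theorem hb_norm_sq {ι κ : Type} [Fintype ι] [Fintype κ] (M : Matrix ι κ ℝ) :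
    ‖M‖ ^ 2 = (M * Mᵀ).trace := by
  rw [frobenius_norm_def, ← Real.sqrt_eq_rpow, Real.sq_sqrt]
  · simp [Matrix.trace, Matrix.mul_apply, sq]
  · positivity

theorem hb_frob {ι κ : Type} [Fintype ι] [Fintype κ] (M : Matrix ι κ ℝ) :
    ‖M‖ = Real.sqrt (∑ i, ∑ j, (M i j) ^ 2) := by
  rw [frobenius_norm_def, ← Real.sqrt_eq_rpow]
  simp

theorem hb_trace_le {ι : Type} [Fintype ι] [DecidableEq ι] (M : Matrix ι ι ℝ) :
    M.trace ≤ (1 + Fintype.card ι) * ‖M‖ := by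
  have h : ∀ i, M i i ≤ ‖M‖ := by
    intro i
    rw [hb_frob]
    apply Real.le_sqrt_of_sq_le
    calc M i i ^ 2 ≤ ∑ j, M i j ^ 2 :=
          Finset.single_le_sum (f := fun j => M i j ^ 2) (fun _ _ => sq_nonneg _)
            (Finset.mem_univ i)
      _ ≤ _ := Finset.single_le_sum (f := fun i => ∑ j, M i j ^ 2)
          (fun _ _ => Finset.sum_nonneg fun _ _ => sq_nonneg _) (Finset.mem_univ i)
  calc M.trace ≤ ∑ _i : ι, ‖M‖ := Finset.sum_le_sum fun i _ => h i
    _ = Fintype.card ι * ‖M‖ := by simp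
    _ ≤ _ := by nlinarith [norm_nonneg M]

theorem hb_quad {ι : Type} [Fintype ι] (M : Matrix ι ι ℝ) (x : ι → ℝ) :
    |x ⬝ᵥ M *ᵥ x| ≤ ‖M‖ * (x ⬝ᵥ x) := by
  have h1 : (x ⬝ᵥ M *ᵥ x) ^ 2 ≤ (x ⬝ᵥ x) * ((M *ᵥ x) ⬝ᵥ (M *ᵥ x)) := by
    have := Finset.sum_mul_sq_le_sq_mul_sq Finset.univ x (M *ᵥ x)
    simpa [dotProduct, sq] using this
  have h2 : (M *ᵥ x) ⬝ᵥ (M *ᵥ x) ≤ ‖M‖ ^ 2 * (x ⬝ᵥ x) := by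
    rw [hb_frob, Real.sq_sqrt (by positivity), Finset.sum_mul]
    apply Finset.sum_le_sum
    intro i _
    have := Finset.sum_mul_sq_le_sq_mul_sq Finset.univ (M i) x
    simpa [dotProduct, mulVec, sq] using this
  have h3 : 0 ≤ x ⬝ᵥ x := by
    simp only [dotProduct]; exact Finset.sum_nonneg fun _ _ => mul_self_nonneg _
  apply abs_le_of_sq_le_sq _ (by positivity)
  nlinarith [mul_le_mul_of_nonneg_left h2 h3]

/-- block estimate -/
theorem hb_block {ι : Type} [Fintype ι] [DecidableEq ι] (S : Matrix ι ι ℝ) (hS : S.PosSemidef)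
    (Q G : Matrix ι ι ℝ) (hQ : Q = G * S) : ∃ c : ℝ, 0 ≤ c ∧ ∀ X : Matrix ι ι ℝ, X.PosSemidef →
      0 ≤ (S * X).trace ∧
      ‖Q * X‖ ≤ c * Real.sqrt (S * X).trace * Real.sqrt X.trace ∧
      ‖Q * X * Qᵀ‖ ≤ c * (S * X).trace := by
  obtain ⟨B, rfl⟩ := hb_factor S hS
  refine ⟨‖G * Bᵀ‖ + ‖G * Bᵀ‖ ^ 2, by positivity, ?_⟩
  intro X hX
  obtain ⟨H, hH⟩ := hb_factor X hX
  have t1 : (Bᵀ * B * X).trace = ‖B * Hᵀ‖ ^ 2 := by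
    rw [hb_norm_sq, hH, Matrix.mul_assoc, Matrix.trace_mul_comm]
    simp [Matrix.mul_assoc]
  have t2 : X.trace = ‖Hᵀ‖ ^ 2 := by
    rw [hb_norm_sq, hH]; simp
  rw [t1, t2, Real.sqrt_sq (norm_nonneg _), Real.sqrt_sq (norm_nonneg _)]
  refine ⟨by positivity, ?_, ?_⟩
  · have : Q * X = (G * Bᵀ) * (B * Hᵀ) * H := by
      rw [hQ, hH]; simp only [Matrix.mul_assoc]
    calc ‖Q * X‖ ≤ ‖G * Bᵀ‖ * ‖B * Hᵀ‖ * ‖H‖ := by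
          rw [this]
          refine (frobenius_norm_mul _ _).trans ?_
          gcongr
          exact frobenius_norm_mul _ _
      _ ≤ _ := by
        rw [frobenius_norm_transpose]
        gcongr
        nlinarith [sq_nonneg ‖G * Bᵀ‖]
  · have : Q * X * Qᵀ = ((G * Bᵀ) * (B * Hᵀ)) * ((G * Bᵀ) * (B * Hᵀ))ᵀ := by
      rw [hQ, hH]; simp only [Matrix.mul_assoc, transpose_mul, transpose_transpose]
    rw [this]
    have h5 := frobenius_norm_mul (G * Bᵀ) (B * Hᵀ)
    calc _ ≤ ‖(G * Bᵀ) * (B * Hᵀ)‖ * ‖((G * Bᵀ) * (B * Hᵀ))ᵀ‖ := frobenius_norm_mul _ _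
      _ = ‖(G * Bᵀ) * (B * Hᵀ)‖ ^ 2 := by rw [frobenius_norm_transpose, sq]
      _ ≤ (‖G * Bᵀ‖ * ‖B * Hᵀ‖) ^ 2 := by gcongr
      _ ≤ _ := by
        rw [mul_pow]
        gcongr
        linarith [norm_nonneg (G * Bᵀ)]

theorem hb_hoffman {E W : Type} [NormedAddCommGroup E] [NormedSpace ℝ E] [FiniteDimensional ℝ E]
    [NormedAddCommGroup W] [NormedSpace ℝ W] (L : E →ₗ[ℝ] W) :
    ∃ c : ℝ, 0 < c ∧ ∀ x : E, ∃ z : E, L z = L x ∧ ‖z‖ ≤ c * ‖L x‖ := by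
  let L1 : E →L[ℝ] LinearMap.range L := LinearMap.toContinuousLinearMap L.rangeRestrict
  have : CompleteSpace E := FiniteDimensional.complete ℝ E
  have : CompleteSpace (LinearMap.range L) := FiniteDimensional.complete ℝ _
  obtain ⟨c, hc, h⟩ := L1.exists_preimage_norm_le L.surjective_rangeRestrict
  refine ⟨c, hc, fun x => ?_⟩
  obtain ⟨z, hz, hz'⟩ := h ⟨L x, x, rfl⟩
  exact ⟨z, congrArg Subtype.val hz, hz'⟩

theorem hb_bound {E W : Type} [NormedAddCommGroup E] [NormedSpace ℝ E] [FiniteDimensional ℝ E]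
    [NormedAddCommGroup W] [NormedSpace ℝ W] (L : E →ₗ[ℝ] W) :
    ∃ c : ℝ, 0 ≤ c ∧ ∀ x : E, ‖L x‖ ≤ c * ‖x‖ :=
  ⟨‖LinearMap.toContinuousLinearMap L‖, norm_nonneg _,
    fun x => (LinearMap.toContinuousLinearMap L).le_opNorm x⟩

theorem hb_sep {ι W : Type} [Fintype ι] [DecidableEq ι]
    [NormedAddCommGroup W] [NormedSpace ℝ W] (L : Matrix ι ι ℝ →ₗ[ℝ] W)
    (hLt : ∀ M, L Mᵀ = L M) (X0 : Matrix ι ι ℝ) (hX0 : X0.PosSemidef)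
    (hno : ¬ ∃ (M : Matrix ι ι ℝ) (l : ℝ), 0 < l ∧ (∀ x, l * (x ⬝ᵥ x) ≤ x ⬝ᵥ M *ᵥ x) ∧
      L M = L X0) :
    ∃ S : Matrix ι ι ℝ, S.PosSemidef ∧ S ≠ 0 ∧ (S * X0).trace = 0 ∧
      ∀ M, L M = 0 → (S * M).trace = 0 := by
  have hnn : ∀ x : ι → ℝ, 0 ≤ x ⬝ᵥ x := fun x => by
    simp only [dotProduct]; exact Finset.sum_nonneg fun _ _ => mul_self_nonneg _
  let K : Set (Matrix ι ι ℝ) := {M | ∃ l : ℝ, 0 < l ∧ ∀ x, l * (x ⬝ᵥ x) ≤ x ⬝ᵥ M *ᵥ x}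
  let V : Set (Matrix ι ι ℝ) := {M | L M = L X0}
  have hKc : Convex ℝ K := by
    rintro M ⟨l, hl, hM⟩ N ⟨k, hk, hN⟩ a b ha hb hab
    refine ⟨a * l + b * k, ?_, fun x => ?_⟩
    · rcases ha.eq_or_lt with h | h
      · have : b = 1 := by linarith
        rw [← h, this]; linarith
      · positivity
    · rw [add_mulVec, dotProduct_add, smul_mulVec, smul_mulVec, dotProduct_smul, dotProduct_smul,
        smul_eq_mul, smul_eq_mul]
      nlinarith [mul_le_mul_of_nonneg_left (hM x) ha, mul_le_mul_of_nonneg_left (hN x) hb]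
  have hKo : IsOpen K := by
    refine Metric.isOpen_iff.2 ?_
    rintro M ⟨l, hl, hM⟩
    refine ⟨l / 2, by positivity, ?_⟩
    intro N hN
    rw [Metric.mem_ball, dist_eq_norm] at hN
    refine ⟨l / 2, by positivity, fun x => ?_⟩
    have h1 := hb_quad (N - M) x
    have h2 : x ⬝ᵥ (N - M) *ᵥ x = x ⬝ᵥ N *ᵥ x - x ⬝ᵥ M *ᵥ x := by
      rw [sub_mulVec, dotProduct_sub]
    have h3 := (abs_le.1 h1).1
    nlinarith [hM x, mul_le_mul_of_nonneg_right hN.le (hnn x)]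
  have hVc : Convex ℝ V := by
    intro M hM N hN a b ha hb hab
    change L (a • M + b • N) = L X0
    rw [map_add, map_smul, map_smul, show L M = L X0 from hM, show L N = L X0 from hN, ← add_smul,
      hab, one_smul]
  have hdisj : Disjoint K V := by
    rw [Set.disjoint_left]
    rintro M ⟨l, hl, hM⟩ hV
    exact hno ⟨M, l, hl, hM, hV⟩
  obtain ⟨f, u, hf1, hf2⟩ := geometric_hahn_banach_open hKc hKo hVc hdisj
  have hone : (1 : Matrix ι ι ℝ) ∈ K := ⟨1, one_pos, fun x => by simp⟩
  have hK0 : ∀ M ∈ K, f M ≤ 0 := by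
    intro M hM
    by_contra hpos
    push Not at hpos
    obtain ⟨l, hl, hM⟩ := hM
    have : ((|u| + 1) / f M) • M ∈ K := by
      have hp : 0 < (|u| + 1) / f M := by positivity
      refine ⟨(|u| + 1) / f M * l, by positivity, fun x => ?_⟩
      rw [smul_mulVec, dotProduct_smul, smul_eq_mul]
      nlinarith [mul_le_mul_of_nonneg_left (hM x) hp.le]
    have h := hf1 _ this
    rw [map_smul, smul_eq_mul, div_mul_cancel₀ _ hpos.ne'] at h
    linarith [le_abs_self u]
  have hPS : ∀ M : Matrix ι ι ℝ, (∀ x, 0 ≤ x ⬝ᵥ M *ᵥ x) → f M ≤ 0 := by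
    intro M hM
    by_contra hpos
    push Not at hpos
    have key : ∀ t : ℝ, 0 < t → f M + t * f 1 ≤ 0 := by
      intro t ht
      have : M + t • (1 : Matrix ι ι ℝ) ∈ K := by
        refine ⟨t, ht, fun x => ?_⟩
        rw [add_mulVec, dotProduct_add, smul_mulVec, dotProduct_smul, one_mulVec, smul_eq_mul]
        linarith [hM x]
      have := hK0 _ this
      rwa [map_add, map_smul, smul_eq_mul] at this
    have h1 := key (f M / (2 * (|f 1| + 1))) (by positivity)
    have h2 : f M / (2 * (|f 1| + 1)) * f 1 ≥ - (f M / 2) := by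
      have : f M / (2 * (|f 1| + 1)) * (|f 1| + 1) = f M / 2 := by field_simp
      have hp : 0 < f M / (2 * (|f 1| + 1)) := by positivity
      nlinarith [neg_abs_le (f 1)]
    linarith
  have hu : 0 ≤ u := by
    by_contra hneg
    push Not at hneg
    have hp : 0 < -u / (2 * (|f 1| + 1)) := by
      have : 0 < -u := by linarith
      positivity
    have : (-u / (2 * (|f 1| + 1))) • (1 : Matrix ι ι ℝ) ∈ K :=
      ⟨_, hp, fun x => by rw [smul_mulVec, dotProduct_smul, one_mulVec, smul_eq_mul]⟩
    have h := hf1 _ this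
    rw [map_smul, smul_eq_mul] at h
    have h2 : -u / (2 * (|f 1| + 1)) * (|f 1| + 1) = -u / 2 := by field_simp
    nlinarith [neg_abs_le (f 1)]
  have hX0' : ∀ x, 0 ≤ x ⬝ᵥ X0 *ᵥ x := fun x => by
    simpa using hX0.dotProduct_mulVec_nonneg x
  have hfX0 : f X0 = 0 := le_antisymm (hPS _ hX0') (hu.trans (hf2 X0 rfl))
  have hu0 : u = 0 := le_antisymm (hfX0 ▸ hf2 X0 rfl) hu
  have hf1neg : f 1 < 0 := hu0 ▸ hf1 1 hone
  have hker : ∀ M, L M = 0 → f M = 0 := by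
    have : ∀ M, L M = 0 → 0 ≤ f M := by
      intro M hM
      have : X0 + M ∈ V := by change L (X0 + M) = L X0; rw [map_add, hM, add_zero]
      have := hf2 _ this
      rw [map_add, hfX0, hu0] at this
      linarith
    intro M hM
    refine le_antisymm ?_ (this M hM)
    have := this (-M) (by rw [map_neg, hM, neg_zero])
    rw [map_neg] at this
    linarith
  have hft : ∀ M, f Mᵀ = f M := by
    intro M
    have := hker (Mᵀ - M) (by rw [map_sub, hLt, sub_self])
    rw [map_sub] at this
    linarith
  let S : Matrix ι ι ℝ := Matrix.of fun i j => - f (Matrix.single i j 1)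
  have hS : ∀ M, (S * M).trace = - f M := by
    intro M
    rw [← hft M]
    conv_rhs => rw [matrix_eq_sum_single Mᵀ]
    rw [map_sum]
    simp only [map_sum, Matrix.trace, Matrix.diag, Matrix.mul_apply]
    rw [← Finset.sum_neg_distrib]
    refine Finset.sum_congr rfl fun i _ => ?_
    rw [← Finset.sum_neg_distrib]
    refine Finset.sum_congr rfl fun j _ => ?_
    have : Matrix.single i j (Mᵀ i j) = (M j i) • Matrix.single i j (1:ℝ) := by
      rw [Matrix.smul_single]; simp
    rw [this, map_smul]
    simp only [S, Matrix.of_apply, smul_eq_mul]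
    ring
  have hSs : S.IsHermitian := by
    ext i j
    simp only [S, conjTranspose_apply, Matrix.of_apply, star_trivial]
    rw [← hft, Matrix.transpose_single]
  refine ⟨S, ?_, ?_, ?_, ?_⟩
  · refine Matrix.PosSemidef.of_dotProduct_mulVec_nonneg hSs fun x => ?_
    have h1 : star x ⬝ᵥ S *ᵥ x = (S * vecMulVec x x).trace := by
      rw [Matrix.mul_vecMulVec, Matrix.trace_vecMulVec, star_trivial, dotProduct_comm]
    rw [h1, hS]
    have := hPS (vecMulVec x x) (fun y => by
      have : y ⬝ᵥ vecMulVec x x *ᵥ y = (x ⬝ᵥ y) ^ 2 := by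
        rw [Matrix.vecMulVec_mulVec]
        simp [dotProduct_smul, dotProduct_comm y x, sq]
      rw [this]; positivity)
    linarith
  · intro h0
    have := hS 1
    rw [h0] at this
    simp at this
    linarith
  · rw [hS, hfX0, neg_zero]
  · intro M hM
    rw [hS, hker M hM, neg_zero]

theorem hb_slater {ι W : Type} [Fintype ι] [DecidableEq ι]
    [NormedAddCommGroup W] [NormedSpace ℝ W] (L : Matrix ι ι ℝ →ₗ[ℝ] W)
    (hLt : ∀ M, L Mᵀ = L M) (X0 : Matrix ι ι ℝ) (R : ℝ) (_hR : 0 ≤ R)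
    (M : Matrix ι ι ℝ) (l : ℝ) (hl : 0 < l) (hM : ∀ x, l * (x ⬝ᵥ x) ≤ x ⬝ᵥ M *ᵥ x)
    (hLM : L M = L X0) :
    ∃ c : ℝ, 0 ≤ c ∧ ∀ X : Matrix ι ι ℝ, X.PosSemidef → ‖X‖ ≤ R →
      ∃ Y : Matrix ι ι ℝ, Y.PosSemidef ∧ L Y = L X0 ∧ ‖X - Y‖ ≤ c * ‖L X - L X0‖ := by
  have hnn : ∀ x : ι → ℝ, 0 ≤ x ⬝ᵥ x := fun x => by
    simp only [dotProduct]; exact Finset.sum_nonneg fun _ _ => mul_self_nonneg _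
  have hquadT : ∀ (N : Matrix ι ι ℝ) (x : ι → ℝ), x ⬝ᵥ Nᵀ *ᵥ x = x ⬝ᵥ N *ᵥ x := by
    intro N x
    rw [mulVec_transpose, dotProduct_comm, dotProduct_mulVec]
  obtain ⟨c, hc, hH⟩ := hb_hoffman L
  refine ⟨c / l * R + c + c / l * ‖M‖, by positivity, ?_⟩
  intro X hX hXR
  set ε := ‖L X - L X0‖ with hε
  have hε0 : 0 ≤ ε := norm_nonneg _
  obtain ⟨z, hz, hzn⟩ := hH (X0 - X)
  have hzn : ‖z‖ ≤ c * ε := by rwa [map_sub, norm_sub_rev] at hzn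
  rw [map_sub] at hz
  let s := c * ε / l
  have hs : 0 ≤ s := by positivity
  let sy : Matrix ι ι ℝ → Matrix ι ι ℝ := fun N => (1 / 2 : ℝ) • (N + Nᵀ)
  have syL : ∀ N, L (sy N) = L N := by
    intro N
    simp only [sy, map_smul, map_add, hLt]
    rw [← two_smul ℝ, smul_smul]; norm_num
  have syn : ∀ N, ‖sy N‖ ≤ ‖N‖ := by
    intro N
    simp only [sy]
    rw [norm_smul]
    have := norm_add_le N Nᵀ
    rw [frobenius_norm_transpose] at this
    norm_num; linarith
  have syq : ∀ N x, x ⬝ᵥ sy N *ᵥ x = x ⬝ᵥ N *ᵥ x := by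
    intro N x
    simp only [sy]
    rw [smul_mulVec, dotProduct_smul, add_mulVec, dotProduct_add, hquadT, smul_eq_mul]; ring
  have sys : ∀ N, (sy N).IsHermitian := by
    intro N
    simp only [sy, Matrix.IsHermitian, conjTranspose_eq_transpose_of_trivial]
    rw [transpose_smul, transpose_add, transpose_transpose, add_comm]
  clear_value sy
  have h1s : 0 < 1 + s := by linarith
  refine ⟨(1 + s)⁻¹ • (X + sy z + s • sy M), ?_, ?_, ?_⟩
  · refine Matrix.PosSemidef.smul (Matrix.PosSemidef.of_dotProduct_mulVec_nonneg ?_ ?_)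
      (by positivity)
    · refine (hX.1.add (sys z)).add ?_
      have := sys M
      simp only [Matrix.IsHermitian, conjTranspose_eq_transpose_of_trivial] at this ⊢
      rw [transpose_smul, this]
    · intro x
      rw [star_trivial, add_mulVec, add_mulVec, dotProduct_add, dotProduct_add, smul_mulVec,
        dotProduct_smul, syq, syq, smul_eq_mul]
      have h1 : 0 ≤ x ⬝ᵥ X *ᵥ x := by simpa using hX.dotProduct_mulVec_nonneg x
      have h2 := (abs_le.1 (hb_quad z x)).1
      have h3 := mul_le_mul_of_nonneg_left (hM x) hs
      have h4 : s * l = c * ε := by simp only [s]; field_simp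
      have h5 := mul_le_mul_of_nonneg_right hzn (hnn x)
      have h6 : s * (l * (x ⬝ᵥ x)) = c * ε * (x ⬝ᵥ x) := by rw [← mul_assoc, h4]
      linarith
  · rw [map_smul, map_add, map_add, map_smul, syL, syL, hz, hLM, add_sub_cancel]
    nth_rewrite 1 [← one_smul ℝ (L X0)]
    rw [← add_smul, smul_smul, inv_mul_cancel₀ h1s.ne', one_smul]
  · have : X - (1 + s)⁻¹ • (X + sy z + s • sy M) = (1 + s)⁻¹ • (s • X - sy z - s • sy M) := by
      have : X = (1 + s)⁻¹ • ((1 + s) • X) := by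
        rw [smul_smul, inv_mul_cancel₀ h1s.ne', one_smul]
      nth_rewrite 1 [this]
      rw [← smul_sub]
      congr 1
      rw [add_smul, one_smul]; abel
    rw [this, norm_smul, Real.norm_of_nonneg (by positivity)]
    have hle : (1 + s)⁻¹ ≤ 1 := inv_le_one_of_one_le₀ (by linarith)
    calc _ ≤ 1 * ‖s • X - sy z - s • sy M‖ := by gcongr
      _ ≤ ‖s • X‖ + ‖sy z‖ + ‖s • sy M‖ := by
        rw [one_mul]
        refine (norm_sub_le _ _).trans ?_
        gcongr
        exact norm_sub_le _ _
      _ ≤ s * R + c * ε + s * ‖M‖ := by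
        rw [norm_smul, norm_smul, Real.norm_of_nonneg hs]
        gcongr
        · exact (syn z).trans hzn
        · exact syn M
      _ = _ := by simp only [s]; ring

theorem hb_step {ι W : Type} [Fintype ι] [DecidableEq ι]
    [NormedAddCommGroup W] [NormedSpace ℝ W] (L : Matrix ι ι ℝ →ₗ[ℝ] W)
    (hLt : ∀ M, L Mᵀ = L M) (X0 : Matrix ι ι ℝ) (hX0 : X0.PosSemidef) (R : ℝ) (hR : 0 ≤ R)
    (hno : ¬ ∃ (M : Matrix ι ι ℝ) (l : ℝ), 0 < l ∧ (∀ x, l * (x ⬝ᵥ x) ≤ x ⬝ᵥ M *ᵥ x) ∧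
      L M = L X0) :
    ∃ (κ : Type) (_ : Fintype κ) (_ : DecidableEq κ) (U : Matrix ι κ ℝ) (c : ℝ),
      Fintype.card κ < Fintype.card ι ∧ 0 ≤ c ∧ U * (Uᵀ * X0 * U) * Uᵀ = X0 ∧
      ∀ X : Matrix ι ι ℝ, X.PosSemidef → ‖X‖ ≤ R →
        ‖X - U * (Uᵀ * X * U) * Uᵀ‖ ≤ c * Real.sqrt ‖L X - L X0‖ ∧
        (IsEmpty κ → ‖X - X0‖ ≤ c * ‖L X - L X0‖) := by
  obtain ⟨S, hS, hS0, hSX0, hSker⟩ := hb_sep L hLt X0 hX0 hno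
  obtain ⟨κ, i1, i2, U, G, hcard, hUG⟩ := hb_kernel S hS hS0
  obtain ⟨c1, hc1, hblock⟩ := hb_block S hS (G * S) G rfl
  obtain ⟨c2, hc2, hH⟩ := hb_hoffman L
  have hQ : G * S = 1 - U * Uᵀ := by rw [hUG]; simp
  rw [hQ] at hblock
  have hQt : (1 - U * Uᵀ)ᵀ = 1 - U * Uᵀ := by simp
  set c3 : ℝ := (1 + Fintype.card ι) * (‖S‖ * c2) with hc3
  have hc3' : 0 ≤ c3 := by positivity
  have htr : ∀ X, (S * X).trace ≤ c3 * ‖L X - L X0‖ := by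
    intro X
    obtain ⟨z, hz, hzn⟩ := hH (X - X0)
    have h1 := hSker (X - X0 - z) (by rw [map_sub, hz, sub_self])
    rw [Matrix.mul_sub, Matrix.mul_sub, trace_sub, trace_sub, hSX0] at h1
    have h2 := hb_trace_le (S * z)
    have h3 := frobenius_norm_mul S z
    rw [map_sub] at hzn
    calc (S * X).trace = (S * z).trace := by linarith
      _ ≤ (1 + Fintype.card ι) * (‖S‖ * (c2 * ‖L X - L X0‖)) := by
        refine h2.trans ?_
        gcongr
        refine h3.trans ?_
        gcongr
      _ = _ := by rw [hc3]; ring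
  have hdec : ∀ X : Matrix ι ι ℝ, X.PosSemidef → ‖X - U * (Uᵀ * X * U) * Uᵀ‖ ≤
      (1 + ‖U * Uᵀ‖) * ‖(1 - U * Uᵀ) * X‖ := by
    intro X hX
    have e : X - U * (Uᵀ * X * U) * Uᵀ = (1 - U * Uᵀ) * X + (U * Uᵀ) * ((1 - U * Uᵀ) * X)ᵀ := by
      have hXt : Xᵀ = X := by
        have := hX.1
        rwa [Matrix.IsHermitian, conjTranspose_eq_transpose_of_trivial] at this
      rw [transpose_mul, hQt, hXt]
      simp only [Matrix.mul_assoc, Matrix.sub_mul, Matrix.mul_sub, Matrix.one_mul, Matrix.mul_one]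
      abel
    rw [e]
    refine (norm_add_le _ _).trans ?_
    have := frobenius_norm_mul (U * Uᵀ) ((1 - U * Uᵀ) * X)ᵀ
    rw [frobenius_norm_transpose] at this
    linarith
  have hX0e : U * (Uᵀ * X0 * U) * Uᵀ = X0 := by
    have h1 := hdec X0 hX0
    have h2 := (hblock X0 hX0).2.1
    rw [hSX0] at h2
    simp only [Real.sqrt_zero, mul_zero, zero_mul] at h2
    have h3 : ‖(1 - U * Uᵀ) * X0‖ = 0 := le_antisymm h2 (norm_nonneg _)
    rw [h3, mul_zero] at h1
    have := norm_le_zero_iff.1 h1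
    exact (sub_eq_zero.1 this).symm
  set c4 : ℝ := (1 + ‖U * Uᵀ‖) * (c1 * Real.sqrt c3 * Real.sqrt ((1 + Fintype.card ι) * R)) with hc4
  have hc4' : 0 ≤ c4 := by positivity
  refine ⟨κ, i1, i2, U, c4 + c1 * c3, hcard, by positivity, hX0e, ?_⟩
  intro X hX hXR
  have hb := hblock X hX
  have hε : 0 ≤ ‖L X - L X0‖ := norm_nonneg _
  have hsq : 0 ≤ Real.sqrt ‖L X - L X0‖ := Real.sqrt_nonneg _
  constructor
  · calc _ ≤ (1 + ‖U * Uᵀ‖) * ‖(1 - U * Uᵀ) * X‖ := hdec X hX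
      _ ≤ (1 + ‖U * Uᵀ‖) * (c1 * Real.sqrt (c3 * ‖L X - L X0‖) *
            Real.sqrt ((1 + Fintype.card ι) * R)) := by
        gcongr
        refine hb.2.1.trans ?_
        gcongr
        · exact htr X
        · refine (hb_trace_le X).trans ?_
          gcongr
      _ = c4 * Real.sqrt ‖L X - L X0‖ := by rw [Real.sqrt_mul hc3', hc4]; ring
      _ ≤ _ := by
        have : 0 ≤ c1 * c3 * Real.sqrt ‖L X - L X0‖ := by positivity
        linarith
  · intro hemp
    have hP : U * Uᵀ = 0 := by ext i j; simp [Matrix.mul_apply]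
    have hX00 : X0 = 0 := by
      rw [← hX0e]; ext i j; simp [Matrix.mul_apply]
    have h := hb.2.2
    rw [hP] at h
    simp only [sub_zero, Matrix.one_mul, transpose_one, Matrix.mul_one] at h
    rw [hX00] at htr ⊢
    rw [sub_zero]
    calc ‖X‖ ≤ c1 * (S * X).trace := h
      _ ≤ c1 * (c3 * ‖L X - L 0‖) := by gcongr; exact htr X
      _ ≤ _ := by
        have : 0 ≤ c4 * ‖L X - L 0‖ := by positivity
        linarith

theorem hb_pow (e M g : ℝ) (he : 0 ≤ e) (heM : e ≤ M) (hg : 0 < g) (hg1 : g ≤ 1) :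
    e ≤ (M + 1) * e ^ g := by
  rcases le_or_gt e 1 with h | h
  · rcases he.eq_or_lt with h0 | h0
    · rw [← h0, Real.zero_rpow hg.ne', mul_zero]
    · have h1 := Real.rpow_le_rpow_of_exponent_ge h0 h hg1
      rw [Real.rpow_one] at h1
      nlinarith [Real.rpow_nonneg he g]
  · have := Real.one_le_rpow h.le hg.le
    nlinarith

theorem hb_main (d : ℕ) : ∀ {ι W : Type} [Fintype ι] [DecidableEq ι]
    [NormedAddCommGroup W] [NormedSpace ℝ W] (L : Matrix ι ι ℝ →ₗ[ℝ] W)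
    (_ : ∀ M, L Mᵀ = L M) (X0 : Matrix ι ι ℝ) (_ : X0.PosSemidef) (R : ℝ) (_ : 0 ≤ R)
    (_ : Fintype.card ι ≤ d + 1),
    ∃ c : ℝ, 0 ≤ c ∧ ∀ X : Matrix ι ι ℝ, X.PosSemidef → ‖X‖ ≤ R →
      ∃ Y : Matrix ι ι ℝ, Y.PosSemidef ∧ L Y = L X0 ∧
        ‖X - Y‖ ≤ c * ‖L X - L X0‖ ^ ((1 / 2 : ℝ) ^ d) := by
  induction d with
  | zero =>
    intro ι W _ _ _ _ L hLt X0 hX0 R hR hcard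
    simp only [pow_zero, Real.rpow_one]
    by_cases hno : ∃ (M : Matrix ι ι ℝ) (l : ℝ), 0 < l ∧
        (∀ x, l * (x ⬝ᵥ x) ≤ x ⬝ᵥ M *ᵥ x) ∧ L M = L X0
    · obtain ⟨M, l, hl, hM, hLM⟩ := hno
      exact hb_slater L hLt X0 R hR M l hl hM hLM
    · obtain ⟨κ, i1, i2, U, c, hk, hc, hX0e, h⟩ := hb_step L hLt X0 hX0 R hR hno
      have : IsEmpty κ := Fintype.card_eq_zero_iff.1 (by omega)
      exact ⟨c, hc, fun X hX hXR => ⟨X0, hX0, rfl, (h X hX hXR).2 this⟩⟩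
  | succ d ih =>
    intro ι W _ _ _ _ L hLt X0 hX0 R hR hcard
    obtain ⟨cL, hcL, hLb⟩ := hb_bound L
    have hres : ∀ X : Matrix ι ι ℝ, ‖X‖ ≤ R → ‖L X - L X0‖ ≤ cL * (R + ‖X0‖) := by
      intro X hX
      rw [← map_sub]
      refine (hLb _).trans ?_
      gcongr
      exact (norm_sub_le _ _).trans (by gcongr)
    set B := cL * (R + ‖X0‖) with hB
    have hB0 : 0 ≤ B := by positivity
    have hgpos : ∀ k : ℕ, (0:ℝ) < (1 / 2 : ℝ) ^ k := fun k => by positivity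
    have hgle : ∀ k : ℕ, (1 / 2 : ℝ) ^ k ≤ 1 := fun k => pow_le_one₀ (by norm_num) (by norm_num)
    by_cases hno : ∃ (M : Matrix ι ι ℝ) (l : ℝ), 0 < l ∧
        (∀ x, l * (x ⬝ᵥ x) ≤ x ⬝ᵥ M *ᵥ x) ∧ L M = L X0
    · obtain ⟨M, l, hl, hM, hLM⟩ := hno
      obtain ⟨c, hc, h⟩ := hb_slater L hLt X0 R hR M l hl hM hLM
      refine ⟨c * (B + 1), by positivity, fun X hX hXR => ?_⟩
      obtain ⟨Y, hY, hLY, hXY⟩ := h X hX hXR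
      refine ⟨Y, hY, hLY, hXY.trans ?_⟩
      rw [mul_assoc]
      gcongr
      exact hb_pow _ _ _ (norm_nonneg _) (hres X hXR) (hgpos _) (hgle _)
    · obtain ⟨κ, i1, i2, U, c, hk, hc, hX0e, h⟩ := hb_step L hLt X0 hX0 R hR hno
      let T : Matrix κ κ ℝ →ₗ[ℝ] Matrix ι ι ℝ :=
        { toFun := fun M => U * M * Uᵀ
          map_add' := fun M N => by rw [Matrix.mul_add, Matrix.add_mul]
          map_smul' := fun r M => by simp }
      have hT : ∀ M, T M = U * M * Uᵀ := fun M => rfl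
      have hTt : ∀ M, T Mᵀ = (T M)ᵀ := fun M => by
        rw [hT, hT]; simp [Matrix.mul_assoc]
      have hps : ∀ X : Matrix ι ι ℝ, X.PosSemidef → (Uᵀ * X * U).PosSemidef := fun X hX => by
        have := hX.conjTranspose_mul_mul_same U
        rwa [conjTranspose_eq_transpose_of_trivial] at this
      have hnU : ∀ X : Matrix ι ι ℝ, ‖Uᵀ * X * U‖ ≤ ‖U‖ ^ 2 * ‖X‖ := fun X => by
        calc _ ≤ ‖Uᵀ‖ * ‖X‖ * ‖U‖ := by
              refine (frobenius_norm_mul _ _).trans ?_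
              gcongr
              exact frobenius_norm_mul _ _
          _ = _ := by rw [frobenius_norm_transpose]; ring
      have hnT : ∀ M, ‖T M‖ ≤ ‖U‖ ^ 2 * ‖M‖ := fun M => by
        rw [hT]
        calc _ ≤ ‖U‖ * ‖M‖ * ‖Uᵀ‖ := by
              refine (frobenius_norm_mul _ _).trans ?_
              gcongr
              exact frobenius_norm_mul _ _
          _ = _ := by rw [frobenius_norm_transpose]; ring
      obtain ⟨c', hc', h'⟩ := ih (L ∘ₗ T) (fun M => by
          rw [LinearMap.comp_apply, LinearMap.comp_apply, hTt, hLt]) (Uᵀ * X0 * U) (hps X0 hX0)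
          (‖U‖ ^ 2 * R) (by positivity) (by omega)
      simp only [LinearMap.comp_apply] at h'
      have hTX0 : T (Uᵀ * X0 * U) = X0 := hX0e
      rw [hTX0] at h'
      set a : ℝ := Real.sqrt B + cL * c with ha
      have ha0 : 0 ≤ a := by positivity
      set g : ℝ := (1 / 2 : ℝ) ^ d with hg
      refine ⟨c * (Real.sqrt B + 1) + ‖U‖ ^ 2 * (c' * a ^ g), by positivity, ?_⟩
      intro X hX hXR
      obtain ⟨Y, hY, hLY, hXY⟩ := h' (Uᵀ * X * U) (hps X hX)
        ((hnU X).trans (by gcongr))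
      have hTY : (T Y).PosSemidef := by
        rw [hT]
        have := hY.mul_mul_conjTranspose_same U
        rwa [conjTranspose_eq_transpose_of_trivial] at this
      refine ⟨T Y, hTY, hLY, ?_⟩
      have h1 := (h X hX hXR).1
      have h1' : ‖X - T (Uᵀ * X * U)‖ ≤ c * Real.sqrt ‖L X - L X0‖ := h1
      set ε := ‖L X - L X0‖ with hε
      have hε0 : 0 ≤ ε := norm_nonneg _
      have hεB : ε ≤ B := hres X hXR
      have hs0 : 0 ≤ Real.sqrt ε := Real.sqrt_nonneg _
      have hsB : Real.sqrt ε ≤ Real.sqrt B := Real.sqrt_le_sqrt hεB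
      have hgexp : Real.sqrt ε ^ g = ε ^ ((1 / 2 : ℝ) ^ (d + 1)) := by
        rw [Real.sqrt_eq_rpow, ← Real.rpow_mul hε0, hg, pow_succ']
      have h2 : ‖L (T (Uᵀ * X * U)) - L X0‖ ≤ a * Real.sqrt ε := by
        have e : L (T (Uᵀ * X * U)) - L X0 = (L X - L X0) - L (X - T (Uᵀ * X * U)) := by
          rw [map_sub]; abel
        rw [e]
        calc _ ≤ ε + cL * (c * Real.sqrt ε) := by
              refine (norm_sub_le _ _).trans ?_
              gcongr
              exact (hLb _).trans (by gcongr)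
          _ ≤ _ := by
            have : ε = Real.sqrt ε * Real.sqrt ε := (Real.mul_self_sqrt hε0).symm
            rw [ha]
            nlinarith
      have h3 : ‖L (T (Uᵀ * X * U)) - L X0‖ ^ g ≤ a ^ g * Real.sqrt ε ^ g := by
        rw [← Real.mul_rpow ha0 hs0]
        exact Real.rpow_le_rpow (norm_nonneg _) h2 (hgpos d).le
      have h4 : ‖X - T Y‖ ≤ ‖X - T (Uᵀ * X * U)‖ + ‖T (Uᵀ * X * U - Y)‖ := by
        have e : X - T Y = (X - T (Uᵀ * X * U)) + T (Uᵀ * X * U - Y) := by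
          rw [map_sub]; abel
        rw [e]; exact norm_add_le _ _
      rw [← hgexp]
      calc ‖X - T Y‖ ≤ c * Real.sqrt ε + ‖U‖ ^ 2 * (c' * (a ^ g * Real.sqrt ε ^ g)) := by
            refine h4.trans ?_
            gcongr
            refine (hnT _).trans ?_
            gcongr
            refine hXY.trans ?_
            gcongr
        _ ≤ c * ((Real.sqrt B + 1) * Real.sqrt ε ^ g)
            + ‖U‖ ^ 2 * (c' * (a ^ g * Real.sqrt ε ^ g)) := by
          gcongr
          exact hb_pow _ _ _ hs0 hsB (hgpos d) (hgle d)
        _ = _ := by ring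

theorem hb_sym {ι : Type} {X : Matrix ι ι ℝ} (hX : X.PosSemidef) : Xᵀ = X := by
  have := hX.1
  rwa [Matrix.IsHermitian, conjTranspose_eq_transpose_of_trivial] at this

theorem hb_tr_nonneg {ι : Type} [Fintype ι] [DecidableEq ι] {S X : Matrix ι ι ℝ}
    (hS : S.PosSemidef) (hX : X.PosSemidef) : 0 ≤ (S * X).trace := by
  obtain ⟨c, hc, h⟩ := hb_block S hS _ 0 rfl
  exact (h X hX).1

theorem hb_coercive {ι : Type} [Fintype ι] [DecidableEq ι] {D : Matrix ι ι ℝ}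
    (hD : D.PosDef) : ∃ c : ℝ, 0 ≤ c ∧ ∀ X : Matrix ι ι ℝ, X.PosSemidef →
      ‖X‖ ≤ c * (D * X).trace := by
  obtain ⟨c, hc, h⟩ := hb_block D hD.posSemidef 1 D⁻¹ (by
    rw [Matrix.nonsing_inv_mul]
    exact hD.det_pos.ne'.isUnit)
  refine ⟨c, hc, fun X hX => ?_⟩
  simpa using (h X hX).2.2

theorem hb_closed {ι : Type} [Fintype ι] [DecidableEq ι] :
    IsClosed {X : Matrix ι ι ℝ | X.PosSemidef} := by
  have : {X : Matrix ι ι ℝ | X.PosSemidef} = {X | Xᵀ = X} ∩ ⋂ x : ι → ℝ, {X | 0 ≤ x ⬝ᵥ X *ᵥ x} := by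
    ext X
    simp only [mem_ofPred_eq, mem_inter_iff, mem_iInter, posSemidef_iff_dotProduct_mulVec,
      Matrix.IsHermitian, conjTranspose_eq_transpose_of_trivial, star_trivial]
  rw [this]
  refine IsClosed.inter (isClosed_eq (by fun_prop) (by fun_prop)) (isClosed_iInter fun x => ?_)
  exact isClosed_le (by fun_prop) (by fun_prop)

theorem hb_opt {ι W : Type} [Fintype ι] [DecidableEq ι]
    [NormedAddCommGroup W] [NormedSpace ℝ W] (L : Matrix ι ι ℝ →ₗ[ℝ] W)
    (D : Matrix ι ι ℝ) (hD : D.PosDef) (X1 : Matrix ι ι ℝ) (hX1 : X1.PosSemidef)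
    (d : ℕ) (hd : Fintype.card ι ≤ d + 1) :
    ∃ (X0 : Matrix ι ι ℝ) (c : ℝ), X0.PosSemidef ∧ L X0 = L X1 ∧ 0 ≤ c ∧
      (∀ X : Matrix ι ι ℝ, X.PosSemidef → L X = L X1 → (D * X0).trace ≤ (D * X).trace) ∧
      ∀ (X : Matrix ι ι ℝ) (e : ℝ), X.PosSemidef → L X = L X1 → e ≤ 1 →
        (D * X).trace ≤ (D * X0).trace + e →
        ∃ Y : Matrix ι ι ℝ, Y.PosSemidef ∧ L Y = L X1 ∧ (D * Y).trace = (D * X0).trace ∧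
          ‖X - Y‖ ≤ c * e ^ ((1 / 2 : ℝ) ^ d) := by
  obtain ⟨cD, hcD, hco⟩ := hb_coercive hD
  let trD : Matrix ι ι ℝ →ₗ[ℝ] ℝ := Matrix.traceLinearMap ι ℝ ℝ ∘ₗ LinearMap.mulLeft ℝ D
  have htrD : ∀ X, trD X = (D * X).trace := fun X => rfl
  let F : Set (Matrix ι ι ℝ) := {X | X.PosSemidef} ∩ ({X | L X = L X1} ∩ {X | trD X ≤ trD X1})
  have hFc : IsCompact F := by
    have : ProperSpace (Matrix ι ι ℝ) := FiniteDimensional.proper ℝ _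
    refine Metric.isCompact_of_isClosed_isBounded ?_ ?_
    · refine hb_closed.inter (IsClosed.inter ?_ ?_)
      · exact isClosed_eq (LinearMap.continuous_of_finiteDimensional L) continuous_const
      · exact isClosed_le (LinearMap.continuous_of_finiteDimensional trD) continuous_const
    · refine (Metric.isBounded_closedBall (x := 0) (r := cD * trD X1)).subset ?_
      rintro X ⟨h1, _, h3⟩
      rw [mem_closedBall_zero_iff]
      refine (hco X h1).trans ?_
      gcongr
      exact h3
  obtain ⟨X0, ⟨hX0, hLX0, hX0v⟩, hmin⟩ := hFc.exists_isMinOn ⟨X1, hX1, rfl, le_refl (trD X1)⟩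
    (LinearMap.continuous_of_finiteDimensional trD).continuousOn
  have hLX0 : L X0 = L X1 := hLX0
  have hopt : ∀ X : Matrix ι ι ℝ, X.PosSemidef → L X = L X1 → (D * X0).trace ≤ (D * X).trace := by
    intro X hX hLX
    rcases le_or_gt (trD X) (trD X1) with h | h
    · exact hmin ⟨hX, hLX, h⟩
    · exact le_trans hX0v h.le
  let sy : Matrix ι ι ℝ →ₗ[ℝ] Matrix ι ι ℝ :=
    (1 / 2 : ℝ) • (LinearMap.id + (Matrix.transposeLinearEquiv ι ι ℝ ℝ).toLinearMap)
  have hsy : ∀ M, sy M = (1 / 2 : ℝ) • (M + Mᵀ) := fun M => rfl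
  have hsyt : ∀ M, sy Mᵀ = sy M := fun M => by
    rw [hsy, hsy, transpose_transpose, add_comm]
  have hsyp : ∀ M : Matrix ι ι ℝ, M.PosSemidef → sy M = M := fun M hM => by
    rw [hsy, hb_sym hM, ← two_smul ℝ, smul_smul]; norm_num
  let L2 : Matrix ι ι ℝ →ₗ[ℝ] W × ℝ := (L.prod trD) ∘ₗ sy
  have hL2 : ∀ M : Matrix ι ι ℝ, M.PosSemidef → L2 M = (L M, trD M) := fun M hM => by
    simp only [L2, LinearMap.comp_apply, hsyp M hM]; rfl
  have htr0 : 0 ≤ (D * X0).trace := hb_tr_nonneg hD.posSemidef hX0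
  obtain ⟨c, hc, h⟩ := hb_main d L2 (fun M => by simp only [L2, LinearMap.comp_apply, hsyt]) X0 hX0
    (cD * ((D * X0).trace + 1)) (by positivity) hd
  refine ⟨X0, c, hX0, hLX0, hc, hopt, ?_⟩
  intro X e hX hLX he hXe
  obtain ⟨Y, hY, hLY, hXY⟩ := h X hX ((hco X hX).trans (by gcongr; linarith))
  rw [hL2 Y hY, hL2 X0 hX0, Prod.mk.injEq] at hLY
  refine ⟨Y, hY, hLY.1.trans hLX0, hLY.2, hXY.trans ?_⟩
  gcongr
  rw [hL2 X hX, hL2 X0 hX0, hLX, hLX0, Prod.mk_sub_mk, sub_self, Prod.norm_def]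
  simp only [norm_zero, htrD, Real.norm_eq_abs]
  have := hopt X hX hLX
  rw [abs_of_nonneg (by linarith), max_le_iff]
  constructor <;> linarith

theorem hb_final {n m : ℕ} (C Cbar : Matrix (Fin n) (Fin n) ℝ)
    (A : Fin m → Matrix (Fin n) (Fin n) ℝ) (b : Fin m → ℝ)
    (hSA : StandingAssumptions C Cbar A b) (d : ℕ) (hd : n ≤ d + 1) :
    ∃ c : ℝ, 0 < c ∧ ∀ μ : ℝ, 0 < μ → (n : ℝ) * μ ≤ 1 →
      ∀ (Xμ Sμ : Matrix (Fin n) (Fin n) ℝ) (yμ : Fin m → ℝ),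
        CentralSol C Cbar A b 0 μ Xμ yμ Sμ →
        (∃ X ∈ PrimalOpt C Cbar A b 0,
          frobNorm (Xμ - X) ≤ c * ((n : ℝ) * μ) ^ ((1 / 2 : ℝ) ^ d)) ∧
        (∃ S ∈ {S | ∃ y : Fin m → ℝ, (y, S) ∈ DualOpt C Cbar A b 0},
          frobNorm (Sμ - S) ≤ c * ((n : ℝ) * μ) ^ ((1 / 2 : ℝ) ^ d)) := by
  obtain ⟨hC, hCb, hA, hLI, X0, y0, S0, hX0, hX0p, hS0, hS0p⟩ := hSA
  have hfrob : ∀ M : Matrix (Fin n) (Fin n) ℝ, frobNorm M = ‖M‖ := fun M => (hb_frob M).symm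
  have hdual : ∀ y S X, DualFeasible C Cbar A 0 y S → PrimalFeasible A b X →
      ((C + (0:ℝ) • Cbar) * X).trace = ∑ i, b i * y i + (S * X).trace := by
    intro y S X hS hX
    rw [← hS.2.1, Matrix.add_mul, trace_add, Finset.sum_mul, trace_sum]
    congr 1
    refine Finset.sum_congr rfl fun i _ => ?_
    rw [Matrix.smul_mul, trace_smul, hX.2.1 i, smul_eq_mul, mul_comm]
  let L : Matrix (Fin n) (Fin n) ℝ →ₗ[ℝ] (Fin m → ℝ) :=
    LinearMap.pi fun i => Matrix.traceLinearMap (Fin n) ℝ ℝ ∘ₗ LinearMap.mulLeft ℝ (A i)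
  have hL : ∀ X i, L X i = (A i * X).trace := fun X i => rfl
  have hfeasL : ∀ X, PrimalFeasible A b X → L X = L X0 := by
    intro X hX
    ext i
    rw [hL, hL, hX.2.1, hX0.2.1]
  have hLfeas : ∀ X : Matrix (Fin n) (Fin n) ℝ, X.PosSemidef → L X = L X0 →
      PrimalFeasible A b X := by
    intro X hX hLX
    refine ⟨hb_sym hX, fun i => ?_, hX⟩
    rw [← hL, hLX, hL, hX0.2.1]
  obtain ⟨q, hq⟩ := (Submodule.span ℝ (Set.range A)).exists_isCompl
  let L' : Matrix (Fin n) (Fin n) ℝ →ₗ[ℝ] q := q.projectionOnto _ hq.symm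
  have hL' : ∀ S, L' S = L' S0 ↔ ∃ u : Fin m → ℝ, ∑ i, u i • A i = S - S0 := by
    intro S
    rw [← Submodule.mem_span_range_iff_exists_fun, ← sub_eq_zero, ← map_sub, ← LinearMap.mem_ker,
      Submodule.ker_projectionOnto]
  have hfeasL' : ∀ y S, DualFeasible C Cbar A 0 y S → L' S = L' S0 := by
    intro y S hS
    rw [hL']
    refine ⟨y0 - y, ?_⟩
    have h := hS.2.1.trans hS0.2.1.symm
    simp only [Pi.sub_apply, sub_smul, Finset.sum_sub_distrib]
    rw [sub_eq_sub_iff_add_eq_add, ← h, add_comm]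
  have hLfeas' : ∀ S : Matrix (Fin n) (Fin n) ℝ, S.PosSemidef → L' S = L' S0 →
      ∃ y, DualFeasible C Cbar A 0 y S := by
    intro S hS hLS
    obtain ⟨u, hu⟩ := (hL' S).1 hLS
    refine ⟨y0 - u, hb_sym hS, ?_, hS⟩
    rw [← hS0.2.1]
    simp only [Pi.sub_apply, sub_smul, Finset.sum_sub_distrib]
    rw [hu]; abel
  obtain ⟨Xs, c1, hXs, hLXs, hc1, hXopt, hXerr⟩ :=
    hb_opt L S0 hS0p X0 hX0.2.2 d (by simpa using hd)
  obtain ⟨Ss, c2, hSs, hLSs, hc2, hSopt, hSerr⟩ :=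
    hb_opt L' X0 hX0p S0 hS0.2.2 d (by simpa using hd)
  refine ⟨c1 + c2 + 1, by positivity, ?_⟩
  intro μ hμ hnμ Xμ Sμ yμ ⟨hXμ, hSμ, hXS⟩
  have hpw : 0 ≤ ((n : ℝ) * μ) ^ ((1 / 2 : ℝ) ^ d) := by positivity
  have htr : (Sμ * Xμ).trace = n * μ := by
    rw [Matrix.trace_mul_comm, hXS, trace_smul, trace_one, Fintype.card_fin, smul_eq_mul, mul_comm]
  have hXsf := hLfeas Xs hXs hLXs
  obtain ⟨ys, hSsf⟩ := hLfeas' Ss hSs hLSs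
  constructor
  · obtain ⟨Y, hY, hLY, hDY, hXY⟩ := hXerr Xμ (n * μ) hXμ.2.2 (hfeasL _ hXμ) hnμ (by
      have h1 := hdual y0 S0 Xμ hS0 hXμ
      have h2 := hdual yμ Sμ Xμ hSμ hXμ
      have h3 := hdual y0 S0 Xs hS0 hXsf
      have h4 := hdual yμ Sμ Xs hSμ hXsf
      have h5 := hb_tr_nonneg hSμ.2.2 hXs
      linarith)
    have hYf := hLfeas Y hY hLY
    refine ⟨Y, ⟨hYf, fun X' hX' => ?_⟩, ?_⟩
    · rw [hdual y0 S0 Y hS0 hYf, hdual y0 S0 X' hS0 hX', hDY]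
      have := hXopt X' hX'.2.2 (hfeasL _ hX')
      linarith
    · rw [hfrob]
      nlinarith
  · obtain ⟨Z, hZ, hLZ, hDZ, hSZ⟩ := hSerr Sμ (n * μ) hSμ.2.2 (hfeasL' _ _ hSμ) hnμ (by
      rw [Matrix.trace_mul_comm X0, Matrix.trace_mul_comm X0]
      have h1 := hdual yμ Sμ X0 hSμ hX0
      have h2 := hdual ys Ss X0 hSsf hX0
      have h3 := hdual yμ Sμ Xμ hSμ hXμ
      have h4 := hdual ys Ss Xμ hSsf hXμ
      have h5 := hb_tr_nonneg hSs hXμ.2.2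
      linarith)
    obtain ⟨y, hZf⟩ := hLfeas' Z hZ hLZ
    refine ⟨Z, ⟨y, hZf, fun y' S' hS' => ?_⟩, ?_⟩
    · have h1 := hdual y Z X0 hZf hX0
      have h2 := hdual y' S' X0 hS' hX0
      have h3 := hSopt S' hS'.2.2 (hfeasL' _ _ hS')
      rw [← hDZ, Matrix.trace_mul_comm X0, Matrix.trace_mul_comm X0] at h3
      change ∑ i, b i * y' i ≤ ∑ i, b i * y i
      linarith
    · rw [hfrob]
      nlinarith

end HB

/-- a Hölderian error bound for the distance of central solutions to the
optimal sets. -/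
theorem stmt14 {n m : ℕ} (C Cbar : Matrix (Fin n) (Fin n) ℝ)
    (A : Fin m → Matrix (Fin n) (Fin n) ℝ) (b : Fin m → ℝ)
    (hSA : StandingAssumptions C Cbar A b) :
    ∃ (c μhat γ : ℝ), 0 < c ∧ 0 < μhat ∧ (2 : ℝ) ^ ((1 : ℝ) - (n : ℝ)) ≤ γ ∧
      ∀ μ : ℝ, 0 < μ → μ ≤ μhat →
        ∀ (Xμ Sμ : Matrix (Fin n) (Fin n) ℝ) (yμ : Fin m → ℝ),
          CentralSol C Cbar A b 0 μ Xμ yμ Sμ →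
          sInf ((fun X => frobNorm (Xμ - X)) '' PrimalOpt C Cbar A b 0) ≤
              c * ((n : ℝ) * μ) ^ γ ∧
            sInf ((fun S => frobNorm (Sμ - S)) ''
                {S | ∃ y : Fin m → ℝ, (y, S) ∈ DualOpt C Cbar A b 0}) ≤
              c * ((n : ℝ) * μ) ^ γ := by
  have hle : ∀ (P : Set (Matrix (Fin n) (Fin n) ℝ)) (M : Matrix (Fin n) (Fin n) ℝ) (r : ℝ),
      (∃ X ∈ P, frobNorm (M - X) ≤ r) → sInf ((fun X => frobNorm (M - X)) '' P) ≤ r := by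
    rintro P M r ⟨X, hX, h⟩
    have hb : BddBelow ((fun X => frobNorm (M - X)) '' P) := by
      refine ⟨0, ?_⟩
      rintro _ ⟨Y, _, rfl⟩
      exact Real.sqrt_nonneg _
    exact (csInf_le hb (Set.mem_image_of_mem _ hX)).trans h
  have hμ : ∀ μ : ℝ, 0 < μ → μ ≤ 1 / ((n : ℝ) + 1) → (n : ℝ) * μ ≤ 1 := by
    intro μ h0 h
    rw [le_div_iff₀ (by positivity)] at h
    linarith
  rcases Nat.eq_zero_or_pos n with h0 | hpos
  · obtain ⟨c, hc, h⟩ := hb_final C Cbar A b hSA 0 (by omega)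
    refine ⟨c, 1 / ((n : ℝ) + 1), 2 ^ ((1 : ℝ) - (n : ℝ)), hc, by positivity, le_rfl, ?_⟩
    intro μ hμ0 hμ1 Xμ Sμ yμ hcs
    obtain ⟨⟨X, hX, _⟩, ⟨S, hS, _⟩⟩ := h μ hμ0 (hμ μ hμ0 hμ1) Xμ Sμ yμ hcs
    have hz : ∀ M : Matrix (Fin n) (Fin n) ℝ, frobNorm M = 0 := by
      subst h0
      intro M
      simp [frobNorm]
    have hr : 0 ≤ c * ((n : ℝ) * μ) ^ ((2 : ℝ) ^ ((1 : ℝ) - (n : ℝ))) := by positivity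
    exact ⟨hle _ _ _ ⟨X, hX, (hz _).trans_le hr⟩, hle _ _ _ ⟨S, hS, (hz _).trans_le hr⟩⟩
  · obtain ⟨d, rfl⟩ : ∃ d, n = d + 1 := ⟨n - 1, by omega⟩
    obtain ⟨c, hc, h⟩ := hb_final C Cbar A b hSA d le_rfl
    refine ⟨c, 1 / (((d + 1 : ℕ) : ℝ) + 1), (1 / 2 : ℝ) ^ d, hc, by positivity, ?_, ?_⟩
    · apply le_of_eq
      rw [show (1 : ℝ) - ((d + 1 : ℕ) : ℝ) = -(d : ℝ) by push_cast; ring,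
        Real.rpow_neg (by norm_num), Real.rpow_natCast, one_div, inv_pow]
    · intro μ hμ0 hμ1 Xμ Sμ yμ hcs
      obtain ⟨hX, hS⟩ := h μ hμ0 (hμ μ hμ0 hμ1) Xμ Sμ yμ hcs
      exact ⟨hle _ _ _ hX, hle _ _ _ hS⟩
end
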